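/- For every integer k one has: (i) ρ^k, |ρ|^k ∈ S^k_{2,2}(|ρ|) + S^k_{0,1}(|ρ|), uniformly in z ∈ Z₁ ∪ Z₂ ∪ Z₃; consequently (ii) (1−η)ρ^k and (1−η)|ρ|^k belong to 𝒮_0^k; and (iii) (1−η)ρ^k − (1−η)(i√r₀)^k ∈ 𝒮_0^{k−2}. -/

import Mathlib

/- Setting: the cotangent bundle T*Γ of the boundary Γ (dimension n = d−1) is modelled
in local coordinates by `ℝ^n × ℝ^n`.  The data are: `R₀`, the (positive definite,
symmetric) matrix of the principal symbol `r₀(x',ξ') = ⟨R₀(x')ξ',ξ'⟩` of `−Δ_Γ`, and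
`n₀ = n|_Γ > 0`.  `ρ = √(−r₀ + z n₀)` is the square root with `Im ρ > 0`, and
`η = φ₀(r₀/δ₀)` is the cutoff localizing near `ξ' = 0`. -/

open scoped ENNReal

noncomputable section

variable (n : ℕ)

/-- Mixed derivative `∂_{x'}^α ∂_{ξ'}^β a` evaluated on directions `v`, `w`. -/
def Dmix (a : (EuclideanSpace ℝ (Fin n)) × (EuclideanSpace ℝ (Fin n)) → ℂ) (α β : ℕ)
    (v : Fin α → EuclideanSpace ℝ (Fin n)) (w : Fin β → EuclideanSpace ℝ (Fin n))
    (p : (EuclideanSpace ℝ (Fin n)) × (EuclideanSpace ℝ (Fin n))) : ℂ :=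
  iteratedFDeriv ℝ (α + β) a p
    (Fin.append (fun i => ((v i), (0 : EuclideanSpace ℝ (Fin n))))
      (fun i => ((0 : EuclideanSpace ℝ (Fin n)), w i)))

/-- The Japanese bracket `⟨ξ'⟩`. -/
def jap {n : ℕ} (ξ : EuclideanSpace ℝ (Fin n)) : ℝ := Real.sqrt (1 + ‖ξ‖ ^ 2)

/-- `z ∈ Z₁ ∪ Z₂ ∪ Z₃`. -/
def Zall (z : ℂ) : Prop :=
  (z.re = 1 ∧ 0 < |z.im| ∧ |z.im| ≤ 1) ∨ (z.re = -1 ∧ |z.im| ≤ 1) ∨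
    (|z.re| ≤ 1 ∧ |z.im| = 1)

/-- The square root of `w` with nonnegative imaginary part (for `w ∉ [0,∞)` this is the
square root with strictly positive imaginary part). -/
def ssqrt (w : ℂ) : ℂ :=
  if 0 ≤ (w ^ (1 / 2 : ℂ)).im then w ^ (1 / 2 : ℂ) else -(w ^ (1 / 2 : ℂ))

/-- The principal symbol `r₀(x',ξ') = ⟨R₀(x')ξ',ξ'⟩` of `−Δ_Γ`. -/
def rZero (R₀ : EuclideanSpace ℝ (Fin n) → (EuclideanSpace ℝ (Fin n) →L[ℝ] EuclideanSpace ℝ (Fin n)))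
    (p : (EuclideanSpace ℝ (Fin n)) × (EuclideanSpace ℝ (Fin n))) : ℝ :=
  (inner ℝ (R₀ p.1 p.2) p.2 : ℝ)

/-- `ρ(x',ξ',z) = √(−r₀(x',ξ') + z n₀(x'))`, branch with `Im ρ > 0`. -/
def rho (R₀ : EuclideanSpace ℝ (Fin n) → (EuclideanSpace ℝ (Fin n) →L[ℝ] EuclideanSpace ℝ (Fin n)))
    (n₀ : EuclideanSpace ℝ (Fin n) → ℝ) (z : ℂ)
    (p : (EuclideanSpace ℝ (Fin n)) × (EuclideanSpace ℝ (Fin n))) : ℂ :=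
  ssqrt (-(rZero n R₀ p : ℂ) + z * (n₀ p.1 : ℂ))

section JetCalculus

open scoped ContDiff Topology

variable {D F G H : Type*} [NormedAddCommGroup D] [NormedSpace ℝ D]
  [NormedAddCommGroup F] [NormedSpace ℝ F] [NormedAddCommGroup G] [NormedSpace ℝ G]
  [NormedAddCommGroup H] [NormedSpace ℝ H] {ι : Type*}

theorem exists_open_contDiffOn {f : D → F} {x : D} (hf : ContDiffAt ℝ ∞ f x) (m : ℕ) :
    ∃ u : Set D, IsOpen u ∧ x ∈ u ∧ ContDiffOn ℝ m f u := by
  have h : ContDiffAt ℝ m f x := hf.of_le (by exact_mod_cast le_top)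
  obtain ⟨u, hu, hx, hc⟩ := h.contDiffOn' le_rfl (by simp)
  refine ⟨u, hu, hx, ?_⟩
  simpa using hc

theorem bilin_at (B : F →L[ℝ] G →L[ℝ] H) {f : D → F} {g : D → G} {x : D}
    (hf : ContDiffAt ℝ ∞ f x) (hg : ContDiffAt ℝ ∞ g x) (m : ℕ) :
    ‖iteratedFDeriv ℝ m (fun y => B (f y) (g y)) x‖ ≤
      ‖B‖ * ∑ i ∈ Finset.range (m + 1), (m.choose i : ℝ) * ‖iteratedFDeriv ℝ i f x‖ *
        ‖iteratedFDeriv ℝ (m - i) g x‖ := by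
  obtain ⟨u, hu, hxu, hfu⟩ := exists_open_contDiffOn hf m
  obtain ⟨v, hv, hxv, hgv⟩ := exists_open_contDiffOn hg m
  have ho : IsOpen (u ∩ v) := hu.inter hv
  have hx : x ∈ u ∩ v := ⟨hxu, hxv⟩
  have := B.norm_iteratedFDerivWithin_le_of_bilinear (hfu.mono Set.inter_subset_left)
    (hgv.mono Set.inter_subset_right) ho.uniqueDiffOn hx (n := m) le_rfl
  simpa only [iteratedFDerivWithin_of_isOpen _ ho hx] using this

theorem comp_at {g : F → G} {f : D → F} {x : D}
    (hg : ContDiffAt ℝ ∞ g (f x)) (hf : ContDiffAt ℝ ∞ f x) (m : ℕ) {C K : ℝ}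
    (hC : ∀ i, i ≤ m → ‖iteratedFDeriv ℝ i g (f x)‖ ≤ C)
    (hK : ∀ i, 1 ≤ i → i ≤ m → ‖iteratedFDeriv ℝ i f x‖ ≤ K ^ i) :
    ‖iteratedFDeriv ℝ m (fun y => g (f y)) x‖ ≤ m.factorial * C * K ^ m := by
  obtain ⟨u, hu, hxu, hfu⟩ := exists_open_contDiffOn hf m
  obtain ⟨v, hv, hxv, hgv⟩ := exists_open_contDiffOn hg m
  have ho : IsOpen (u ∩ f ⁻¹' v) := hfu.continuousOn.isOpen_inter_preimage hu hv
  have hx : x ∈ u ∩ f ⁻¹' v := ⟨hxu, hxv⟩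
  have := norm_iteratedFDerivWithin_comp_le (n := m) (C := C) (D := K) hgv
    (hfu.mono Set.inter_subset_left) le_rfl hv.uniqueDiffOn ho.uniqueDiffOn
    (fun y hy => hy.2) hx
    (by intro i hi; rw [iteratedFDerivWithin_of_isOpen _ hv hxv]; exact hC i hi)
    (by intro i h1 hi; rw [iteratedFDerivWithin_of_isOpen _ ho hx]; exact hK i h1 hi)
  rw [iteratedFDerivWithin_of_isOpen _ ho hx] at this
  exact this

theorem comp_clm_at {f : F → G} (L : D →L[ℝ] F) {x : D} (hf : ContDiffAt ℝ ∞ f (L x)) (m : ℕ) :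
    iteratedFDeriv ℝ m (fun y => f (L y)) x =
      (iteratedFDeriv ℝ m f (L x)).compContinuousLinearMap fun _ => L := by
  obtain ⟨u, hu, hxu, hfu⟩ := exists_open_contDiffOn hf m
  have ho : IsOpen (L ⁻¹' u) := hu.preimage L.continuous
  have := L.iteratedFDerivWithin_comp_right hfu hu.uniqueDiffOn ho.uniqueDiffOn hxu
    (i := m) le_rfl
  rw [iteratedFDerivWithin_of_isOpen _ ho hxu, iteratedFDerivWithin_of_isOpen _ hu hxu] at this
  exact this

/-- Uniform jet bounds at the origin for a family of functions. -/
def JB (f : ι → D → F) (M : ι → ℝ) : Prop :=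
  (∀ i, ContDiffAt ℝ ∞ (f i) 0) ∧
    ∀ m : ℕ, ∃ C : ℝ, 0 ≤ C ∧ ∀ i, ‖iteratedFDeriv ℝ m (f i) 0‖ ≤ C * M i

theorem JB.unif {f : ι → D → F} {M : ι → ℝ} (h : JB f M) (hM : ∀ i, 0 < M i) (m : ℕ) :
    ∃ C : ℝ, 0 ≤ C ∧ ∀ j ≤ m, ∀ i, ‖iteratedFDeriv ℝ j (f i) 0‖ ≤ C * M i := by
  choose C hC0 hC using h.2
  refine ⟨∑ j ∈ Finset.range (m + 1), C j, Finset.sum_nonneg fun j _ => hC0 j, ?_⟩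
  intro j hj i
  refine (hC j i).trans (mul_le_mul_of_nonneg_right ?_ (hM i).le)
  exact Finset.single_le_sum (f := C) (fun j _ => hC0 j) (by simp; omega)

theorem JB.mono {f : ι → D → F} {M N : ι → ℝ} (h : JB f M) (K : ℝ) (hK : 0 ≤ K)
    (hMN : ∀ i, M i ≤ K * N i) : JB f N := by
  refine ⟨h.1, fun m => ?_⟩
  obtain ⟨C, hC0, hC⟩ := h.2 m
  refine ⟨C * K, by positivity, fun i => (hC i).trans ?_⟩
  rw [mul_assoc]
  exact mul_le_mul_of_nonneg_left (hMN i) hC0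

theorem JB.congr {f g : ι → D → F} {M : ι → ℝ} (h : JB f M) (hfg : ∀ i, g i =ᶠ[𝓝 0] f i) :
    JB g M := by
  refine ⟨fun i => (h.1 i).congr_of_eventuallyEq (hfg i), fun m => ?_⟩
  obtain ⟨C, hC0, hC⟩ := h.2 m
  refine ⟨C, hC0, fun i => ?_⟩
  rw [((hfg i).iteratedFDeriv ℝ m).eq_of_nhds]
  exact hC i

theorem JB.add {f g : ι → D → F} {M : ι → ℝ} (hf : JB f M) (hg : JB g M) :
    JB (fun i y => f i y + g i y) M := by
  refine ⟨fun i => (hf.1 i).add (hg.1 i), fun m => ?_⟩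
  obtain ⟨C, hC0, hC⟩ := hf.2 m
  obtain ⟨C', hC0', hC'⟩ := hg.2 m
  refine ⟨C + C', by positivity, fun i => ?_⟩
  have h1 : ContDiffAt ℝ m (f i) 0 := (hf.1 i).of_le (by exact_mod_cast le_top)
  have h2 : ContDiffAt ℝ m (g i) 0 := (hg.1 i).of_le (by exact_mod_cast le_top)
  have := iteratedFDeriv_add_apply h1 h2
  change ‖iteratedFDeriv ℝ m (f i + g i) 0‖ ≤ _
  rw [this, add_mul]
  exact (norm_add_le _ _).trans (add_le_add (hC i) (hC' i))

theorem JB.clm {f : ι → D → F} {M : ι → ℝ} (hf : JB f M) (L : F →L[ℝ] G) :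
    JB (fun i y => L (f i y)) M := by
  refine ⟨fun i => L.contDiff.contDiffAt.comp 0 (hf.1 i), fun m => ?_⟩
  obtain ⟨C, hC0, hC⟩ := hf.2 m
  refine ⟨‖L‖ * C, by positivity, fun i => ?_⟩
  have h1 : ContDiffAt ℝ m (f i) 0 := (hf.1 i).of_le (by exact_mod_cast le_top)
  have := L.norm_iteratedFDeriv_comp_left h1 (n := m) le_rfl
  refine this.trans ?_
  rw [mul_assoc]
  exact mul_le_mul_of_nonneg_left (hC i) (norm_nonneg _)

theorem JB.bilin (B : F →L[ℝ] G →L[ℝ] H) {f : ι → D → F} {g : ι → D → G} {M N : ι → ℝ}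
    (hf : JB f M) (hg : JB g N) (hM : ∀ i, 0 < M i) (hN : ∀ i, 0 < N i) :
    JB (fun i y => B (f i y) (g i y)) (fun i => M i * N i) := by
  refine ⟨fun i => ?_, fun m => ?_⟩
  · exact B.isBoundedBilinearMap.contDiff.contDiffAt.comp 0 ((hf.1 i).prodMk (hg.1 i))
  obtain ⟨C, hC0, hC⟩ := hf.unif hM m
  obtain ⟨C', hC0', hC'⟩ := hg.unif hN m
  refine ⟨‖B‖ * ∑ j ∈ Finset.range (m + 1), (m.choose j : ℝ) * C * C', by positivity,
    fun i => ?_⟩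
  refine (bilin_at B (hf.1 i) (hg.1 i) m).trans ?_
  rw [mul_assoc, Finset.sum_mul]
  refine mul_le_mul_of_nonneg_left (Finset.sum_le_sum fun j hj => ?_) (norm_nonneg B)
  have hj' : j ≤ m := by simp at hj; omega
  have h1 := hC j hj' i
  have h2 := hC' (m - j) (Nat.sub_le _ _) i
  calc (m.choose j : ℝ) * ‖iteratedFDeriv ℝ j (f i) 0‖ * ‖iteratedFDeriv ℝ (m - j) (g i) 0‖
      ≤ (m.choose j : ℝ) * (C * M i) * (C' * N i) := by
        have := (hM i).le
        gcongr
    _ = _ := by ring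

theorem JB.mul {f g : ι → D → ℂ} {M N : ι → ℝ}
    (hf : JB f M) (hg : JB g N) (hM : ∀ i, 0 < M i) (hN : ∀ i, 0 < N i) :
    JB (fun i y => f i y * g i y) (fun i => M i * N i) := by
  simpa using JB.bilin (ContinuousLinearMap.mul ℝ ℂ) hf hg hM hN

theorem JB.const (c : ι → F) {M : ι → ℝ} (hM : ∀ i, 0 < M i) (K : ℝ) (hK : 0 ≤ K)
    (h : ∀ i, ‖c i‖ ≤ K * M i) :
    JB (fun i (_ : D) => c i) M := by
  refine ⟨fun i => contDiffAt_const, fun m => ⟨K, hK, fun i => ?_⟩⟩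
  rcases m with _ | m
  · simpa using h i
  · have := (hM i).le
    rw [iteratedFDeriv_succ_const]
    simp
    positivity

theorem JB.norm_zero {f : ι → D → F} {M : ι → ℝ} (h : JB f M) :
    ∃ C : ℝ, 0 ≤ C ∧ ∀ i, ‖f i 0‖ ≤ C * M i := by
  simpa using h.2 0

/-- composition with a fixed function with bounded derivatives -/
theorem JB.comp {f : ι → D → F} (hf : JB f (fun _ => 1)) (φ : F → G)
    (hφ : ∀ i, ContDiffAt ℝ ∞ φ (f i 0))
    (hb : ∀ m : ℕ, ∃ C : ℝ, 0 ≤ C ∧ ∀ i, ‖iteratedFDeriv ℝ m φ (f i 0)‖ ≤ C) :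
    JB (fun i y => φ (f i y)) (fun _ => 1) := by
  refine ⟨fun i => (hφ i).comp 0 (hf.1 i), fun m => ?_⟩
  obtain ⟨K, hK0, hK⟩ := hf.unif (fun _ => one_pos) m
  choose C hC0 hC using hb
  have hS : 0 ≤ ∑ j ∈ Finset.range (m + 1), C j := Finset.sum_nonneg fun j _ => hC0 j
  refine ⟨m.factorial * (∑ j ∈ Finset.range (m + 1), C j) * (K + 1) ^ m, by positivity,
    fun i => ?_⟩
  rw [mul_one]
  refine comp_at (hφ i) (hf.1 i) m ?_ ?_
  · intro j hj
    refine (hC j i).trans ?_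
    exact Finset.single_le_sum (f := C) (fun j _ => hC0 j) (by simp; omega)
  · intro j h1 hj
    have := hK j hj i
    calc _ ≤ K * 1 := this
      _ ≤ (K + 1) ^ 1 := by linarith
      _ ≤ (K + 1) ^ j := pow_le_pow_right₀ (by linarith) h1

/-- normalised composition -/
theorem JB.normalized {f : ι → D → ℂ} {M : ι → ℝ} (hf : JB f M) (hM : ∀ i, 0 < M i)
    (c : ℝ) (hc : 0 < c) (hlow : ∀ i, c * M i ≤ ‖f i 0‖)
    (φ : ℂ → ℂ) (hφ : ContDiffAt ℝ ∞ φ 1) :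
    JB (fun i y => φ (f i y / f i 0)) (fun _ => 1) := by
  have hne : ∀ i, f i 0 ≠ 0 := fun i => by
    have := hlow i
    have := mul_pos hc (hM i)
    exact norm_pos_iff.1 (by linarith)
  have h1 : JB (fun i y => f i y / f i 0) (fun _ => 1) := by
    have h2 : JB (fun i (_ : D) => (f i 0)⁻¹) (fun i => (M i)⁻¹) := by
      refine JB.const _ (fun i => inv_pos.2 (hM i)) c⁻¹ (by positivity) fun i => ?_
      rw [norm_inv, ← mul_inv]
      exact inv_anti₀ (mul_pos hc (hM i)) (hlow i)
    have := hf.mul h2 hM (fun i => inv_pos.2 (hM i))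
    simp only [div_eq_mul_inv]
    refine this.mono 1 zero_le_one fun i => ?_
    rw [mul_inv_cancel₀ (hM i).ne']; norm_num
  have e : ∀ i, f i 0 / f i 0 = 1 := fun i => div_self (hne i)
  refine h1.comp φ (fun i => by rw [e]; exact hφ) fun m => ?_
  exact ⟨‖iteratedFDeriv ℝ m φ 1‖, norm_nonneg _, fun i => by rw [e]⟩

theorem JB.zpow {f : ι → D → ℂ} {M : ι → ℝ} (hf : JB f M) (hM : ∀ i, 0 < M i)
    (c : ℝ) (hc : 0 < c) (hlow : ∀ i, c * M i ≤ ‖f i 0‖) (k : ℤ) :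
    JB (fun i y => f i y ^ k) (fun i => M i ^ k) := by
  have hne : ∀ i, f i 0 ≠ 0 := fun i => by
    have := hlow i
    have := mul_pos hc (hM i)
    exact norm_pos_iff.1 (by linarith)
  have h0 : ContDiffAt ℝ ∞ (fun x : ℂ => x ^ k) 1 := by
    rcases k with k | k
    · simpa using contDiffAt_id.pow k
    · simp only [zpow_negSucc]
      exact (contDiffAt_id.pow (k+1)).inv (by simp)
  have h1 := hf.normalized hM c hc hlow _ h0
  obtain ⟨C, hC0, hC⟩ := hf.norm_zero
  have h2 : JB (fun i (_ : D) => (f i 0) ^ k) (fun i => M i ^ k) := by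
    refine JB.const _ (fun i => zpow_pos (hM i) k) (C ^ k + c ^ k) ?_ fun i => ?_
    · positivity
    rw [norm_zpow]
    rw [add_mul, ← mul_zpow, ← mul_zpow]
    have := hM i
    rcases le_total 0 k with hk | hk
    · have := zpow_le_zpow_left₀ hk (norm_nonneg (f i 0)) (hC i)
      have : 0 ≤ (c * M i) ^ k := by positivity
      linarith
    · have : ‖f i 0‖ ^ k ≤ (c * M i) ^ k := by
        obtain ⟨l, rfl⟩ := Int.exists_eq_neg_ofNat hk
        simp only [zpow_neg, zpow_natCast]
        exact inv_anti₀ (by positivity) (pow_le_pow_left₀ (by positivity) (hlow i) l)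
      have : 0 ≤ (C * M i) ^ k := by positivity
      linarith
  have h3 := h2.mul h1 (fun i => zpow_pos (hM i) k) (fun _ => one_pos)
  simp only [mul_one] at h3
  convert h3 using 3 with i y
  rw [← mul_zpow, mul_div_cancel₀ _ (hne i)]

theorem JB.sqrt {f g : ι → D → ℂ} {M : ι → ℝ} (hg : JB g (fun i => M i ^ 2)) (hM : ∀ i, 0 < M i)
    (c : ℝ) (hc : 0 < c) (hlow : ∀ i, c * M i ≤ ‖f i 0‖)
    (hfc : ∀ i, ContinuousAt (f i) 0) (hfg : ∀ i, ∀ᶠ y in 𝓝 0, f i y ^ 2 = g i y) :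
    JB f M := by
  have hne : ∀ i, f i 0 ≠ 0 := fun i => by
    have := hlow i
    have := mul_pos hc (hM i)
    exact norm_pos_iff.1 (by linarith)
  have h0 : ContDiffAt ℝ ∞ (fun x : ℂ => x ^ (1 / 2 : ℂ)) 1 := by
    have : ContDiffAt ℂ ∞ (fun x : ℂ => x ^ (1 / 2 : ℂ)) 1 := by
      have : AnalyticAt ℂ (fun x : ℂ => x ^ (1 / 2 : ℂ)) 1 :=
        analyticAt_id.cpow analyticAt_const (by simp [Complex.slitPlane])
      exact this.contDiffAt
    exact this.restrict_scalars ℝ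
  have e0 : ∀ i, f i 0 ^ 2 = g i 0 := fun i => (hfg i).self_of_nhds
  have h1 := hg.normalized (fun i => pow_pos (hM i) 2) (c ^ 2) (by positivity)
    (fun i => by
      rw [← e0, norm_pow, ← mul_pow]
      have := hM i
      exact pow_le_pow_left₀ (by positivity) (hlow i) 2) _ h0
  obtain ⟨C, hC0, hC⟩ := hg.norm_zero
  have h2 : JB (fun i (_ : D) => f i 0) M := by
    refine JB.const _ hM (C + 1) (by positivity) fun i => ?_
    have h3 := hC i
    rw [← e0, norm_pow] at h3
    have := hM i
    refine le_of_sq_le_sq ?_ (by positivity)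
    calc _ ≤ _ := h3
      _ ≤ _ := by rw [mul_pow]; gcongr; nlinarith
  have h3 := h2.mul h1 hM (fun _ => one_pos)
  simp only [mul_one] at h3
  refine h3.congr fun i => ?_
  have hc1 : ContinuousAt (fun y => f i y / f i 0) 0 := (hfc i).div_const _
  have hpos : ∀ᶠ y in 𝓝 (0:D), 0 < (f i y / f i 0).re := by
    have : ContinuousAt (fun y => (f i y / f i 0).re) 0 := Complex.continuous_re.continuousAt.comp hc1
    exact this.eventually (lt_mem_nhds (by simp [div_self (hne i)]))
  filter_upwards [hpos, hfg i] with y hy h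
  rw [← h, ← e0, ← div_pow]
  have : ((f i y / f i 0) ^ 2) ^ (1 / 2 : ℂ) = f i y / f i 0 := by
    have harg := Complex.abs_arg_lt_pi_div_two_iff.2 (Or.inl hy)
    rw [abs_lt] at harg
    have := Complex.pow_cpow_nat_inv (x := f i y / f i 0) (n := 2) two_ne_zero (by push_cast; linarith) (by push_cast; linarith)
    simpa using this
  rw [this, mul_div_cancel₀ _ (hne i)]

/-- scaling -/
theorem JB.scale {f : ι → D → F} (hf : JB f (fun _ => 1)) {s : ι → ℝ} (hs : ∀ i, 0 < s i)
    (K : ℝ) (hsK : ∀ i, s i ≤ K) (h0 : ∀ i, ‖f i 0‖ ≤ K * s i) :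
    JB (fun i y => f i (s i • y)) s := by
  have hc : ∀ i, ContDiffAt ℝ ∞ (f i) ((s i • ContinuousLinearMap.id ℝ D) 0) := fun i => by
    simpa using hf.1 i
  refine ⟨fun i => ?_, fun m => ?_⟩
  · exact (hc i).comp 0 (s i • ContinuousLinearMap.id ℝ D).contDiff.contDiffAt
  · rcases m with _ | m
    · refine ⟨|K|, abs_nonneg _, fun i => ?_⟩
      have := hs i
      have h1 : ‖f i 0‖ ≤ |K| * s i := (h0 i).trans (by gcongr; exact le_abs_self K)
      simpa using h1
    · obtain ⟨C, hC0, hC⟩ := hf.2 (m + 1)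
      refine ⟨C * |K| ^ m, by positivity, fun i => ?_⟩
      have e := comp_clm_at (s i • ContinuousLinearMap.id ℝ D) (hc i) (m + 1)
      simp only [smul_apply, ContinuousLinearMap.id_apply, smul_zero] at e
      rw [e]
      have hn : ‖s i • ContinuousLinearMap.id ℝ D‖ ≤ s i := by
        rw [norm_smul, Real.norm_of_nonneg (hs i).le]
        exact mul_le_of_le_one_right (hs i).le ContinuousLinearMap.norm_id_le
      have hsi := hs i
      calc _ ≤ ‖iteratedFDeriv ℝ (m + 1) (f i) 0‖ *
            ∏ _j : Fin (m + 1), ‖s i • ContinuousLinearMap.id ℝ D‖ :=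
            ContinuousMultilinearMap.norm_compContinuousLinearMap_le _ _
        _ ≤ (C * 1) * s i ^ (m + 1) := by
            rw [Finset.prod_const, Finset.card_univ, Fintype.card_fin]
            gcongr
            exact hC i
        _ ≤ C * |K| ^ m * s i := by
            rw [pow_succ, mul_one, ← mul_assoc]
            gcongr
            exact (hsK i).trans (le_abs_self K)

theorem JB.sub {f g : ι → D → F} {M : ι → ℝ} (hf : JB f M) (hg : JB g M) :
    JB (fun i y => f i y - g i y) M := by
  have := hf.add (hg.clm (-ContinuousLinearMap.id ℝ F))
  simpa [sub_eq_add_neg] using this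

theorem JB.scale_one {f : ι → D → F} (hf : JB f (fun _ => 1)) {s : ι → ℝ} (hs : ∀ i, 0 < s i)
    (K : ℝ) (hK : 0 ≤ K) (hsK : ∀ i, s i ≤ K) :
    JB (fun i y => f i (s i • y)) (fun _ => 1) := by
  obtain ⟨C, hC0, hC⟩ := hf.norm_zero
  have hcst : JB (fun i (_ : D) => f i 0) (fun _ => 1) :=
    JB.const _ (fun _ => one_pos) C hC0 hC
  have h1 := (hf.sub hcst).scale hs K hsK (fun i => by
    have := hs i
    simp; positivity)
  have h2 := (h1.mono (N := fun _ => 1) K hK (by simpa using hsK)).add hcst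
  simpa using h2

theorem JB.single (f : D → F) (hf : ContDiffAt ℝ ∞ f 0) :
    JB (fun (_ : ι) => f) (fun _ => 1) :=
  ⟨fun _ => hf, fun m => ⟨‖iteratedFDeriv ℝ m f 0‖, norm_nonneg _, fun i => by simp⟩⟩

theorem JB.split {f : ι → D → F} {M : ι → ℝ} (hM : ∀ i, 0 < M i) (P : ι → Prop)
    (h1 : JB (fun i : {i // P i} => f i) (fun i => M i))
    (h2 : JB (fun i : {i // ¬ P i} => f i) (fun i => M i)) : JB f M := by
  refine ⟨fun i => ?_, fun m => ?_⟩
  · by_cases h : P i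
    · exact h1.1 ⟨i, h⟩
    · exact h2.1 ⟨i, h⟩
  · obtain ⟨C, hC0, hC⟩ := h1.2 m
    obtain ⟨C', hC0', hC'⟩ := h2.2 m
    refine ⟨C + C', by positivity, fun i => ?_⟩
    have := hM i
    rw [add_mul]
    by_cases h : P i
    · have := hC ⟨i, h⟩
      have : 0 ≤ C' * M i := by positivity
      simp only at *
      linarith
    · have := hC' ⟨i, h⟩
      have : 0 ≤ C * M i := by positivity
      simp only at *
      linarith

theorem JB.shift {φ : F → G} (hφ : ContDiff ℝ ∞ φ)
    (hb : ∀ m : ℕ, ∃ C : ℝ, ∀ x, ‖iteratedFDeriv ℝ m φ x‖ ≤ C) (x : ι → F) (L : D →L[ℝ] F) :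
    JB (fun i y => φ (x i + L y)) (fun _ => 1) := by
  have hc : ∀ i, ContDiff ℝ ∞ (fun u => φ (x i + u)) := fun i =>
    hφ.comp (contDiff_const.add contDiff_id)
  refine ⟨fun i => ((hc i).comp L.contDiff).contDiffAt, fun m => ?_⟩
  obtain ⟨C, hC⟩ := hb m
  refine ⟨|C| * ‖L‖ ^ m, by positivity, fun i => ?_⟩
  rw [comp_clm_at (f := fun u => φ (x i + u)) L (hc i).contDiffAt m, mul_one,
    iteratedFDeriv_comp_add_left]
  refine (ContinuousMultilinearMap.norm_compContinuousLinearMap_le _ _).trans ?_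
  rw [Finset.prod_const, Finset.card_univ, Fintype.card_fin]
  gcongr
  exact (hC _).trans (le_abs_self C)

end JetCalculus

section SymbolProof

open scoped ContDiff Topology

variable {n} {ι : Type*}


theorem ssqrt_sq (w : ℂ) : ssqrt w ^ 2 = w := by
  have h : (w ^ (1 / 2 : ℂ)) ^ 2 = w := by
    simp
  unfold ssqrt
  split_ifs
  · exact h
  · rw [neg_sq, h]

theorem ssqrt_im_nonneg (w : ℂ) : 0 ≤ (ssqrt w).im := by
  unfold ssqrt
  split_ifs with h
  · exact h
  · simp only [Complex.neg_im]; linarith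

theorem ssqrt_eq {w : ℂ} (hw : -w ∈ Complex.slitPlane) :
    ssqrt w = Complex.I * (-w) ^ (1 / 2 : ℂ) := by
  have h2 : ((-w) ^ (1 / 2 : ℂ)) ^ 2 = -w := by
    simp
  have hre : 0 < ((-w) ^ (1 / 2 : ℂ)).re := by
    rw [← Complex.abs_arg_lt_pi_div_two_iff.trans (or_iff_left ?_)]
    · have h0 := Complex.slitPlane_ne_zero hw
      have hl := Complex.mem_slitPlane_iff_arg.1 hw
      have := Complex.arg_le_pi (-w)
      have h3 := Complex.neg_pi_lt_arg (-w)
      have hlt : Complex.arg (-w) < Real.pi := lt_of_le_of_ne this hl.1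
      rw [Complex.cpow_def_of_ne_zero h0, Complex.arg_exp]
      have e : (Complex.log (-w) * (1 / 2)).im = Complex.arg (-w) / 2 := by
        have : Complex.log (-w) * (1 / 2) = Complex.log (-w) / ((2 : ℝ) : ℂ) := by
          push_cast; ring
        rw [this, Complex.div_ofReal_im, Complex.log_im]
      rw [e, (toIocMod_eq_self _).2 ⟨by linarith, by linarith⟩, abs_lt]
      constructor <;> linarith
    · intro h
      rw [h] at h2
      have h0 := Complex.slitPlane_ne_zero hw
      exact h0 (by rw [← h2]; simp)
  have hsq : ssqrt w ^ 2 = (Complex.I * (-w) ^ (1 / 2 : ℂ)) ^ 2 := by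
    rw [ssqrt_sq, mul_pow, h2]; simp
  rcases sq_eq_sq_iff_eq_or_eq_neg.1 hsq with h | h
  · exact h
  · exfalso
    have h4 := ssqrt_im_nonneg w
    rw [h] at h4
    simp at h4
    simp at hre
    linarith

theorem ssqrt_continuousAt {w : ℂ} (hw : -w ∈ Complex.slitPlane) : ContinuousAt ssqrt w := by
  have h1 : ContinuousAt (fun w : ℂ => Complex.I * (-w) ^ (1 / 2 : ℂ)) w := by
    refine continuousAt_const.mul ?_
    exact ContinuousAt.cpow continuousAt_neg continuousAt_const hw
  refine h1.congr ?_
  have : ∀ᶠ u in 𝓝 w, -u ∈ Complex.slitPlane :=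
    continuousAt_neg.eventually (Complex.isOpen_slitPlane.mem_nhds hw)
  filter_upwards [this] with u hu
  exact (ssqrt_eq hu).symm

theorem ssqrt_norm_sq (w : ℂ) : ‖ssqrt w‖ ^ 2 = ‖w‖ := by
  rw [← norm_pow, ssqrt_sq]

theorem Zall.norm_le {z : ℂ} (h : Zall z) : ‖z‖ ≤ 2 := by
  have h1 : |z.re| ≤ 1 ∧ |z.im| ≤ 1 := by
    rcases h with ⟨h1, h2, h3⟩ | ⟨h1, h3⟩ | ⟨h1, h2⟩
    · exact ⟨by rw [h1]; simp, h3⟩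
    · exact ⟨by rw [h1]; simp, h3⟩
    · exact ⟨h1, h2.le⟩
  exact (Complex.norm_le_abs_re_add_abs_im z).trans (by linarith [h1.1, h1.2])

theorem Zall.slit {z : ℂ} (h : Zall z) {r m : ℝ} (hr : 0 ≤ r) (hm : 0 < m) :
    -(-(r : ℂ) + z * (m : ℂ)) ∈ Complex.slitPlane := by
  rw [Complex.mem_slitPlane_iff]
  by_cases hi : z.im = 0
  · left
    rcases h with ⟨h1, h2, h3⟩ | ⟨h1, h3⟩ | ⟨h1, h2⟩
    · simp [hi] at h2
    · simp [h1]; linarith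
    · simp [hi] at h2
  · right
    simp [hi, hm.ne']

theorem jap_pos (ξ : (EuclideanSpace ℝ (Fin n))) : 0 < jap ξ := Real.sqrt_pos.2 (by positivity)

theorem jap_sq (ξ : (EuclideanSpace ℝ (Fin n))) : jap ξ ^ 2 = 1 + ‖ξ‖ ^ 2 := Real.sq_sqrt (by positivity)

theorem one_le_jap (ξ : (EuclideanSpace ℝ (Fin n))) : 1 ≤ jap ξ := by
  nlinarith [jap_pos ξ, jap_sq ξ, sq_nonneg ‖ξ‖]

theorem norm_le_jap (ξ : (EuclideanSpace ℝ (Fin n))) : ‖ξ‖ ≤ jap ξ := by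
  refine le_of_sq_le_sq ?_ (jap_pos ξ).le
  rw [jap_sq]; linarith

/-- anisotropic dilation -/
def Ldil (s t : ℝ) : (EuclideanSpace ℝ (Fin n)) × (EuclideanSpace ℝ (Fin n)) →L[ℝ] (EuclideanSpace ℝ (Fin n)) × (EuclideanSpace ℝ (Fin n)) :=
  (s • ContinuousLinearMap.id ℝ (EuclideanSpace ℝ (Fin n))).prodMap (t • ContinuousLinearMap.id ℝ (EuclideanSpace ℝ (Fin n)))

theorem Ldil_apply (s t : ℝ) (y : (EuclideanSpace ℝ (Fin n)) × (EuclideanSpace ℝ (Fin n))) : Ldil s t y = (s • y.1, t • y.2) := rfl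

theorem dmix_bound {a : (EuclideanSpace ℝ (Fin n)) × (EuclideanSpace ℝ (Fin n)) → ℂ} {p : (EuclideanSpace ℝ (Fin n)) × (EuclideanSpace ℝ (Fin n))} {s t : ℝ} (hs : 0 < s) (ht : 0 < t)
    (hf : ContDiffAt ℝ ∞ (fun y : (EuclideanSpace ℝ (Fin n)) × (EuclideanSpace ℝ (Fin n)) => a (p + (s • y.1, t • y.2))) 0) (α β : ℕ)
    (v : Fin α → (EuclideanSpace ℝ (Fin n))) (w : Fin β → (EuclideanSpace ℝ (Fin n))) (hv : ∀ i, ‖v i‖ ≤ 1) (hw : ∀ i, ‖w i‖ ≤ 1) :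
    ‖Dmix n a α β v w p‖ * (s ^ α * t ^ β) ≤
      ‖iteratedFDeriv ℝ (α + β) (fun y : (EuclideanSpace ℝ (Fin n)) × (EuclideanSpace ℝ (Fin n)) => a (p + (s • y.1, t • y.2))) 0‖ := by
  have ha : ContDiffAt ℝ ∞ (fun u => a (p + u)) (Ldil s t 0) := by
    have e : (fun u => a (p + u)) =
        (fun y : (EuclideanSpace ℝ (Fin n)) × (EuclideanSpace ℝ (Fin n)) => a (p + (s • y.1, t • y.2))) ∘ (Ldil s⁻¹ t⁻¹) := by
      funext u
      simp [Ldil_apply, smul_smul, hs.ne', ht.ne']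
    rw [e]
    refine ContDiffAt.comp _ ?_ (Ldil s⁻¹ t⁻¹).contDiff.contDiffAt
    simpa using hf
  have key := comp_clm_at (Ldil s t) ha (α + β)
  simp only [map_zero] at key
  rw [iteratedFDeriv_comp_add_left, add_zero] at key
  have key2 : iteratedFDeriv ℝ (α + β) (fun y : (EuclideanSpace ℝ (Fin n)) × (EuclideanSpace ℝ (Fin n)) => a (p + (s • y.1, t • y.2))) 0 =
      (iteratedFDeriv ℝ (α + β) a p).compContinuousLinearMap fun _ => Ldil s t := key
  rw [key2]
  set U : Fin (α + β) → (EuclideanSpace ℝ (Fin n)) × (EuclideanSpace ℝ (Fin n)) := Fin.append (fun i => ((v i), (0 : (EuclideanSpace ℝ (Fin n))))) (fun i => ((0 : (EuclideanSpace ℝ (Fin n))), w i))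
    with hU
  set cf : Fin (α + β) → ℝ := Fin.append (fun _ => s) (fun _ => t) with hcf
  have hUn : ∀ i, ‖U i‖ ≤ 1 := by
    intro i
    refine Fin.addCases (fun j => ?_) (fun j => ?_) i
    · rw [hU, Fin.append_left]; simpa [Prod.norm_def] using hv j
    · rw [hU, Fin.append_right]; simpa [Prod.norm_def] using hw j
  have hLU : (fun i => Ldil s t (U i)) = fun i => cf i • U i := by
    funext i
    refine Fin.addCases (fun j => ?_) (fun j => ?_) i
    · simp [hU, hcf, Ldil_apply]
    · simp [hU, hcf, Ldil_apply]
  have hprod : ∏ i, cf i = s ^ α * t ^ β := by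
    rw [Fin.prod_univ_add]; simp [hcf]
  have happ : ((iteratedFDeriv ℝ (α + β) a p).compContinuousLinearMap fun _ => Ldil s t) U =
      (s ^ α * t ^ β) • Dmix n a α β v w p := by
    rw [ContinuousMultilinearMap.compContinuousLinearMap_apply]
    change (iteratedFDeriv ℝ (α + β) a p) (fun i => Ldil s t (U i)) = _
    rw [hLU, ContinuousMultilinearMap.map_smul_univ, hprod]
    rfl
  have hle := ContinuousMultilinearMap.le_opNorm
    ((iteratedFDeriv ℝ (α + β) a p).compContinuousLinearMap fun _ => Ldil s t) U
  rw [happ, norm_smul, Real.norm_of_nonneg (by positivity)] at hle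
  rw [mul_comm]
  refine hle.trans ?_
  refine mul_le_of_le_one_right (norm_nonneg _) ?_
  exact Finset.prod_le_one (fun _ _ => norm_nonneg _) (fun i _ => hUn i)

theorem JB.dmix {a : ι → (EuclideanSpace ℝ (Fin n)) × (EuclideanSpace ℝ (Fin n)) → ℂ} {p : ι → (EuclideanSpace ℝ (Fin n)) × (EuclideanSpace ℝ (Fin n))} {s t M : ι → ℝ} (hs : ∀ i, 0 < s i)
    (ht : ∀ i, 0 < t i)
    (h : JB (fun i (y : (EuclideanSpace ℝ (Fin n)) × (EuclideanSpace ℝ (Fin n))) => a i (p i + (s i • y.1, t i • y.2))) M) (α β : ℕ) :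
    ∃ C : ℝ, 0 ≤ C ∧ ∀ i, ∀ (v : Fin α → (EuclideanSpace ℝ (Fin n))) (w : Fin β → (EuclideanSpace ℝ (Fin n))),
      (∀ j, ‖v j‖ ≤ 1) → (∀ j, ‖w j‖ ≤ 1) →
      ‖Dmix n (a i) α β v w (p i)‖ ≤ C * (M i / (s i ^ α * t i ^ β)) := by
  obtain ⟨C, hC0, hC⟩ := h.2 (α + β)
  refine ⟨C, hC0, fun i v w hv hw => ?_⟩
  have h1 := (dmix_bound (hs i) (ht i) (h.1 i) α β v w hv hw).trans (hC i)
  have := hs i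
  have := ht i
  rw [← mul_div_assoc, le_div_iff₀ (by positivity)]
  exact h1

theorem dmix_zero {a : (EuclideanSpace ℝ (Fin n)) × (EuclideanSpace ℝ (Fin n)) → ℂ} {p : (EuclideanSpace ℝ (Fin n)) × (EuclideanSpace ℝ (Fin n))} (h : a =ᶠ[𝓝 p] fun _ => 0) (α β : ℕ)
    (v : Fin α → (EuclideanSpace ℝ (Fin n))) (w : Fin β → (EuclideanSpace ℝ (Fin n))) : Dmix n a α β v w p = 0 := by
  unfold Dmix
  rw [(h.iteratedFDeriv ℝ (α + β)).eq_of_nhds]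
  simp

end SymbolProof

section SymbolProof2

open scoped ContDiff Topology

variable {n} {ι : Type*}


/-- The standing hypotheses. -/
structure SymHyp (R₀ : (EuclideanSpace ℝ (Fin n)) → ((EuclideanSpace ℝ (Fin n)) →L[ℝ] (EuclideanSpace ℝ (Fin n)))) (n₀ : (EuclideanSpace ℝ (Fin n)) → ℝ) (φ₀ : ℝ → ℝ) (δ₀ : ℝ) : Prop where
  Rs : ContDiff ℝ ∞ R₀
  Rb : ∀ m : ℕ, ∃ C : ℝ, ∀ x, ‖iteratedFDeriv ℝ m R₀ x‖ ≤ C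
  Rell : ∃ c : ℝ, 0 < c ∧ ∀ x ξ, c * ‖ξ‖ ^ 2 ≤ (inner ℝ (R₀ x ξ) ξ : ℝ)
  ns : ContDiff ℝ ∞ n₀
  nb : ∀ m : ℕ, ∃ C : ℝ, ∀ x, ‖iteratedFDeriv ℝ m n₀ x‖ ≤ C
  npos : ∀ x, 0 < n₀ x
  phis : ContDiff ℝ ∞ φ₀
  phi1 : ∀ t, |t| ≤ 1 → φ₀ t = 1
  phi0 : ∀ t, 2 ≤ |t| → φ₀ t = 0
  dpos : 0 < δ₀
  small : ∃ c : ℝ, 0 < c ∧ ∀ z, Zall z → ∀ p, δ₀ ≤ rZero n R₀ p →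
      c * jap p.2 ≤ ‖rho n R₀ n₀ z p‖

variable {R₀ : (EuclideanSpace ℝ (Fin n)) → ((EuclideanSpace ℝ (Fin n)) →L[ℝ] (EuclideanSpace ℝ (Fin n)))} {n₀ : (EuclideanSpace ℝ (Fin n)) → ℝ} {φ₀ : ℝ → ℝ} {δ₀ : ℝ}

/-- `ρ²` -/
def wsym (R₀ : (EuclideanSpace ℝ (Fin n)) → ((EuclideanSpace ℝ (Fin n)) →L[ℝ] (EuclideanSpace ℝ (Fin n)))) (n₀ : (EuclideanSpace ℝ (Fin n)) → ℝ) (z : ℂ) (p : (EuclideanSpace ℝ (Fin n)) × (EuclideanSpace ℝ (Fin n))) : ℂ :=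
  -(rZero n R₀ p : ℂ) + z * (n₀ p.1 : ℂ)

theorem rho_eq (z : ℂ) (p : (EuclideanSpace ℝ (Fin n)) × (EuclideanSpace ℝ (Fin n))) : rho n R₀ n₀ z p = ssqrt (wsym R₀ n₀ z p) := rfl

theorem rho_sq (z : ℂ) (p : (EuclideanSpace ℝ (Fin n)) × (EuclideanSpace ℝ (Fin n))) : rho n R₀ n₀ z p ^ 2 = wsym R₀ n₀ z p := ssqrt_sq _

theorem SymHyp.r_contDiff (H : SymHyp R₀ n₀ φ₀ δ₀) : ContDiff ℝ ∞ (rZero n R₀) := by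
  unfold rZero
  have := H.Rs
  exact ((this.comp contDiff_fst).clm_apply contDiff_snd).inner ℝ contDiff_snd

theorem SymHyp.r_nonneg (H : SymHyp R₀ n₀ φ₀ δ₀) (p : (EuclideanSpace ℝ (Fin n)) × (EuclideanSpace ℝ (Fin n))) : 0 ≤ rZero n R₀ p := by
  obtain ⟨c, hc, h⟩ := H.Rell
  exact le_trans (by positivity) (h p.1 p.2)

theorem SymHyp.w_slit (H : SymHyp R₀ n₀ φ₀ δ₀) {z : ℂ} (hz : Zall z) (p : (EuclideanSpace ℝ (Fin n)) × (EuclideanSpace ℝ (Fin n))) :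
    -(wsym R₀ n₀ z p) ∈ Complex.slitPlane :=
  hz.slit (H.r_nonneg p) (H.npos p.1)

theorem SymHyp.w_ne (H : SymHyp R₀ n₀ φ₀ δ₀) {z : ℂ} (hz : Zall z) (p : (EuclideanSpace ℝ (Fin n)) × (EuclideanSpace ℝ (Fin n))) :
    wsym R₀ n₀ z p ≠ 0 := by
  have := Complex.slitPlane_ne_zero (H.w_slit hz p)
  simpa using this

theorem SymHyp.rho_ne (H : SymHyp R₀ n₀ φ₀ δ₀) {z : ℂ} (hz : Zall z) (p : (EuclideanSpace ℝ (Fin n)) × (EuclideanSpace ℝ (Fin n))) :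
    rho n R₀ n₀ z p ≠ 0 := by
  intro h
  apply H.w_ne hz p
  rw [← rho_sq, h]; simp

theorem SymHyp.w_cont (H : SymHyp R₀ n₀ φ₀ δ₀) (z : ℂ) : Continuous (wsym R₀ n₀ z) := by
  unfold wsym
  have h1 := H.r_contDiff.continuous
  have h2 := H.ns.continuous
  fun_prop

theorem SymHyp.rho_cont (H : SymHyp R₀ n₀ φ₀ δ₀) {z : ℂ} (hz : Zall z) :
    Continuous (rho n R₀ n₀ z) := by
  rw [continuous_iff_continuousAt]
  intro p
  exact ContinuousAt.comp (f := wsym R₀ n₀ z) (ssqrt_continuousAt (H.w_slit hz p))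
    (H.w_cont z).continuousAt

theorem SymHyp.jb_r (H : SymHyp R₀ n₀ φ₀ δ₀) (p : ι → (EuclideanSpace ℝ (Fin n)) × (EuclideanSpace ℝ (Fin n))) (t T : ι → ℝ) (K : ℝ) (hK : 0 ≤ K)
    (hT : ∀ i, 0 < T i) (h1 : ∀ i, ‖(p i).2‖ ≤ K * T i) (h2 : ∀ i, |t i| ≤ K * T i) :
    JB (fun i (y : (EuclideanSpace ℝ (Fin n)) × (EuclideanSpace ℝ (Fin n))) => rZero n R₀ (p i + (y.1, t i • y.2))) (fun i => T i ^ 2) := by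
  have hR : JB (fun i (y : (EuclideanSpace ℝ (Fin n)) × (EuclideanSpace ℝ (Fin n))) => R₀ ((p i).1 + y.1)) (fun _ => 1) :=
    JB.shift H.Rs H.Rb (fun i => (p i).1) (ContinuousLinearMap.fst ℝ (EuclideanSpace ℝ (Fin n)) (EuclideanSpace ℝ (Fin n)))
  have hsnd : JB (fun (_ : ι) (y : (EuclideanSpace ℝ (Fin n)) × (EuclideanSpace ℝ (Fin n))) => y.2) (fun _ => 1) :=
    JB.single _ contDiff_snd.contDiffAt
  have ht : JB (fun i (_ : (EuclideanSpace ℝ (Fin n)) × (EuclideanSpace ℝ (Fin n))) => t i) T := JB.const _ hT K hK h2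
  have hts := JB.bilin (ContinuousLinearMap.lsmul ℝ ℝ) ht hsnd hT (fun _ => one_pos)
  simp only [mul_one, ContinuousLinearMap.lsmul_apply] at hts
  have hp : JB (fun i (_ : (EuclideanSpace ℝ (Fin n)) × (EuclideanSpace ℝ (Fin n))) => (p i).2) T := JB.const _ hT K hK h1
  have hξ := hp.add hts
  have h3 := JB.bilin (ContinuousLinearMap.id ℝ ((EuclideanSpace ℝ (Fin n)) →L[ℝ] (EuclideanSpace ℝ (Fin n)))) hR hξ (fun _ => one_pos) hT
  simp only [one_mul, ContinuousLinearMap.id_apply] at h3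
  have h4 := JB.bilin (innerSL ℝ) h3 hξ hT hT
  simp only [← sq] at h4
  exact h4

theorem SymHyp.jb_w (H : SymHyp R₀ n₀ φ₀ δ₀) (z : ι → ℂ) (hz : ∀ i, Zall (z i))
    (p : ι → (EuclideanSpace ℝ (Fin n)) × (EuclideanSpace ℝ (Fin n))) (t T : ι → ℝ) (K : ℝ) (hK : 0 ≤ K)
    (hT : ∀ i, 1 ≤ T i) (h1 : ∀ i, ‖(p i).2‖ ≤ K * T i) (h2 : ∀ i, |t i| ≤ K * T i) :
    JB (fun i (y : (EuclideanSpace ℝ (Fin n)) × (EuclideanSpace ℝ (Fin n))) => wsym R₀ n₀ (z i) (p i + (y.1, t i • y.2))) (fun i => T i ^ 2) := by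
  have hT0 : ∀ i, 0 < T i := fun i => one_pos.trans_le (hT i)
  have hr := (H.jb_r p t T K hK hT0 h1 h2).clm (-Complex.ofRealCLM)
  have hn : JB (fun i (y : (EuclideanSpace ℝ (Fin n)) × (EuclideanSpace ℝ (Fin n))) => n₀ ((p i).1 + y.1)) (fun _ => 1) :=
    JB.shift H.ns H.nb (fun i => (p i).1) (ContinuousLinearMap.fst ℝ (EuclideanSpace ℝ (Fin n)) (EuclideanSpace ℝ (Fin n)))
  have hzc : JB (fun i (_ : (EuclideanSpace ℝ (Fin n)) × (EuclideanSpace ℝ (Fin n))) => z i) (fun _ => 1) :=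
    JB.const _ (fun _ => one_pos) 2 (by norm_num) (fun i => by simpa using (hz i).norm_le)
  have hzn := hzc.mul (hn.clm Complex.ofRealCLM) (fun _ => one_pos) (fun _ => one_pos)
  have hzn' := hzn.mono (N := fun i => T i ^ 2) 1 zero_le_one (fun i => by
    have := hT i
    nlinarith)
  exact hr.add hzn'

theorem SymHyp.jb_zn (H : SymHyp R₀ n₀ φ₀ δ₀) (z : ι → ℂ) (hz : ∀ i, Zall (z i))
    (p : ι → (EuclideanSpace ℝ (Fin n)) × (EuclideanSpace ℝ (Fin n))) :
    JB (fun i (y : (EuclideanSpace ℝ (Fin n)) × (EuclideanSpace ℝ (Fin n))) => z i * (n₀ ((p i).1 + y.1) : ℂ)) (fun _ => 1) := by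
  have hn : JB (fun i (y : (EuclideanSpace ℝ (Fin n)) × (EuclideanSpace ℝ (Fin n))) => n₀ ((p i).1 + y.1)) (fun _ => 1) :=
    JB.shift H.ns H.nb (fun i => (p i).1) (ContinuousLinearMap.fst ℝ (EuclideanSpace ℝ (Fin n)) (EuclideanSpace ℝ (Fin n)))
  have hzc : JB (fun i (_ : (EuclideanSpace ℝ (Fin n)) × (EuclideanSpace ℝ (Fin n))) => z i) (fun _ => 1) :=
    JB.const _ (fun _ => one_pos) 2 (by norm_num) (fun i => by simpa using (hz i).norm_le)
  have hzn := hzc.mul (hn.clm Complex.ofRealCLM) (fun _ => one_pos) (fun _ => one_pos)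
  simpa using hzn

theorem SymHyp.phi_bdd (H : SymHyp R₀ n₀ φ₀ δ₀) (m : ℕ) :
    ∃ C : ℝ, 0 ≤ C ∧ ∀ x, ‖iteratedFDeriv ℝ m φ₀ x‖ ≤ C := by
  have hcs : HasCompactSupport φ₀ := by
    refine HasCompactSupport.intro (isCompact_Icc (a := (-2 : ℝ)) (b := 2)) fun x hx => ?_
    apply H.phi0
    by_contra h
    push Not at h
    rw [abs_lt] at h
    exact hx ⟨h.1.le, h.2.le⟩
  obtain ⟨C, hC⟩ := (hcs.iteratedFDeriv (𝕜 := ℝ) m).exists_bound_of_continuous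
    (H.phis.continuous_iteratedFDeriv (by exact_mod_cast le_top))
  exact ⟨C, (norm_nonneg _).trans (hC 0), hC⟩

/-- cutoff on a region where `ξ` is bounded -/
theorem SymHyp.jb_eta (H : SymHyp R₀ n₀ φ₀ δ₀) (p : ι → (EuclideanSpace ℝ (Fin n)) × (EuclideanSpace ℝ (Fin n))) (t : ι → ℝ) (K : ℝ) (hK : 0 ≤ K)
    (h1 : ∀ i, ‖(p i).2‖ ≤ K) (h2 : ∀ i, |t i| ≤ K) :
    JB (fun i (y : (EuclideanSpace ℝ (Fin n)) × (EuclideanSpace ℝ (Fin n))) => (φ₀ (rZero n R₀ (p i + (y.1, t i • y.2)) / δ₀) : ℂ))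
      (fun _ => 1) := by
  have hr := H.jb_r p t (fun _ => 1) K hK (fun _ => one_pos) (by simpa using h1) (by simpa using h2)
  have hr2 := hr.clm (δ₀⁻¹ • ContinuousLinearMap.id ℝ ℝ)
  simp only [one_pow] at hr2
  have h3 := hr2.comp φ₀ (fun i => H.phis.contDiffAt) (fun m => by
    obtain ⟨C, hC0, hC⟩ := H.phi_bdd m
    exact ⟨C, hC0, fun i => hC _⟩)
  have h4 := h3.clm Complex.ofRealCLM
  convert h4 using 4 with i y
  simp [div_eq_inv_mul]

theorem SymHyp.xi_bound (H : SymHyp R₀ n₀ φ₀ δ₀) :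
    ∃ K : ℝ, 1 ≤ K ∧ ∀ p : (EuclideanSpace ℝ (Fin n)) × (EuclideanSpace ℝ (Fin n)), rZero n R₀ p ≤ 2 * δ₀ → jap p.2 ≤ K := by
  obtain ⟨c, hc, h⟩ := H.Rell
  have := H.dpos
  refine ⟨1 + 2 * δ₀ / c, by simp; positivity, fun p hp => ?_⟩
  have h1 : c * ‖p.2‖ ^ 2 ≤ 2 * δ₀ := (h p.1 p.2).trans hp
  have h2 : ‖p.2‖ ^ 2 ≤ 2 * δ₀ / c := by rw [le_div_iff₀ hc]; linarith
  have h3 := jap_sq p.2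
  have h4 := one_le_jap p.2
  nlinarith

/-- from `w` to `ρ` -/
theorem SymHyp.jb_rho_of_w (H : SymHyp R₀ n₀ φ₀ δ₀) {z : ι → ℂ} (hz : ∀ i, Zall (z i))
    {q : ι → (EuclideanSpace ℝ (Fin n)) × (EuclideanSpace ℝ (Fin n)) → (EuclideanSpace ℝ (Fin n)) × (EuclideanSpace ℝ (Fin n))} (hq : ∀ i, Continuous (q i)) {M : ι → ℝ} (hM : ∀ i, 0 < M i)
    (hw : JB (fun i y => wsym R₀ n₀ (z i) (q i y)) (fun i => M i ^ 2))
    (c : ℝ) (hc : 0 < c) (hlow : ∀ i, c * M i ≤ ‖rho n R₀ n₀ (z i) (q i 0)‖) :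
    JB (fun i y => rho n R₀ n₀ (z i) (q i y)) M ∧
    JB (fun i y => (‖rho n R₀ n₀ (z i) (q i y)‖ : ℂ)) M := by
  have hrc : ∀ i, Continuous (fun y => rho n R₀ n₀ (z i) (q i y)) :=
    fun i => (H.rho_cont (hz i)).comp (hq i)
  have hwc : ∀ i, Continuous (fun y => wsym R₀ n₀ (z i) (q i y)) :=
    fun i => (H.w_cont (z i)).comp (hq i)
  have hM2 : ∀ i, 0 < M i ^ 2 := fun i => pow_pos (hM i) 2
  refine ⟨?_, ?_⟩
  · exact hw.sqrt hM c hc hlow (fun i => (hrc i).continuousAt)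
      (fun i => Filter.Eventually.of_forall fun y => rho_sq _ _)
  · have hww := hw.mul (hw.clm (Complex.conjCLE : ℂ →L[ℝ] ℂ)) hM2 hM2
    have hww' := hww.mono (N := fun i => (M i ^ 2) ^ 2) 1 zero_le_one (fun i => by
      rw [one_mul, sq (M i ^ 2)])
    have hlow2 : ∀ i, c ^ 2 * M i ^ 2 ≤ ‖((‖wsym R₀ n₀ (z i) (q i 0)‖ : ℝ) : ℂ)‖ := fun i => by
      rw [Complex.norm_real, norm_norm, ← rho_sq, norm_pow, ← mul_pow]
      have := hM i
      exact pow_le_pow_left₀ (by positivity) (hlow i) 2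
    have hnw := JB.sqrt (f := fun i y => ((‖wsym R₀ n₀ (z i) (q i y)‖ : ℝ) : ℂ)) hww' hM2
      (c ^ 2) (by positivity) hlow2
      (fun i => (Complex.continuous_ofReal.comp (hwc i).norm).continuousAt)
      (fun i => Filter.Eventually.of_forall fun y => by
        simp [Complex.mul_conj, Complex.normSq_eq_norm_sq])
    refine hnw.sqrt hM c hc (fun i => ?_)
      (fun i => (Complex.continuous_ofReal.comp (hrc i).norm).continuousAt)
      (fun i => Filter.Eventually.of_forall fun y => ?_)
    · simpa using hlow i
    · rw [← rho_sq, norm_pow]; push_cast; rfl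

end SymbolProof2

section SymbolProof3

open scoped ContDiff Topology

variable {n} {ι : Type*}

variable {R₀ : (EuclideanSpace ℝ (Fin n)) → ((EuclideanSpace ℝ (Fin n)) →L[ℝ] (EuclideanSpace ℝ (Fin n)))}
  {n₀ : (EuclideanSpace ℝ (Fin n)) → ℝ} {φ₀ : ℝ → ℝ} {δ₀ : ℝ}

theorem padd_zero (p : EuclideanSpace ℝ (Fin n) × EuclideanSpace ℝ (Fin n)) :
    p + ((0 : EuclideanSpace ℝ (Fin n)), (0 : EuclideanSpace ℝ (Fin n))) = p :=
  add_zero p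

theorem SymHyp.regionA (H : SymHyp R₀ n₀ φ₀ δ₀) (k : ℤ) (α β : ℕ) :
    ∃ C : ℝ, 0 ≤ C ∧ ∀ z, Zall z → ∀ p, rZero n R₀ p ≤ 2 * δ₀ →
      ∀ (v : Fin α → EuclideanSpace ℝ (Fin n)) (w : Fin β → EuclideanSpace ℝ (Fin n)),
      (∀ i, ‖v i‖ ≤ 1) → (∀ i, ‖w i‖ ≤ 1) →
      ‖Dmix n (fun q => φ₀ (rZero n R₀ q / δ₀) * rho n R₀ n₀ z q ^ k) α β v w p‖ ≤
          C * ‖rho n R₀ n₀ z p‖ ^ ((k : ℝ) - 2 * α - 2 * β) ∧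
      ‖Dmix n (fun q => φ₀ (rZero n R₀ q / δ₀) * ((‖rho n R₀ n₀ z q‖ : ℂ) ^ k)) α β v w p‖ ≤
          C * ‖rho n R₀ n₀ z p‖ ^ ((k : ℝ) - 2 * α - 2 * β) := by
  let J := {q : ℂ × (EuclideanSpace ℝ (Fin n) × EuclideanSpace ℝ (Fin n)) //
    Zall q.1 ∧ rZero n R₀ q.2 ≤ 2 * δ₀}
  let z : J → ℂ := fun i => i.1.1
  let p : J → (EuclideanSpace ℝ (Fin n) × EuclideanSpace ℝ (Fin n)) := fun i => i.1.2
  have hz : ∀ i, Zall (z i) := fun i => i.2.1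
  obtain ⟨K, hK1, hK⟩ := H.xi_bound
  have hK0 : 0 ≤ K := zero_le_one.trans hK1
  have hp : ∀ i, ‖(p i).2‖ ≤ K := fun i => (norm_le_jap _).trans (hK _ i.2.2)
  have hw := H.jb_w z hz p (fun _ => 1) (fun _ => 1) K hK0 (fun _ => le_rfl) (by simpa using hp)
    (fun _ => by simpa using hK1)
  have he := H.jb_eta p (fun _ => 1) K hK0 hp (fun _ => by simpa using hK1)
  simp only [one_pow] at hw
  obtain ⟨K', hK'0, hK'⟩ := hw.norm_zero
  let M : J → ℝ := fun i => ‖rho n R₀ n₀ (z i) (p i)‖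
  have hM : ∀ i, 0 < M i := fun i => norm_pos_iff.2 (H.rho_ne (hz i) _)
  have hM2 : ∀ i, M i ^ 2 = ‖wsym R₀ n₀ (z i) (p i)‖ := fun i => ssqrt_norm_sq _
  have hMK : ∀ i, M i ^ 2 ≤ K' := fun i => by
    rw [hM2]
    simpa [padd_zero] using hK' i
  have hM2p : ∀ i, 0 < M i ^ 2 := fun i => pow_pos (hM i) 2
  have hws := hw.scale hM2p (K' + 1) (fun i => (hMK i).trans (by linarith)) (fun i => by
    have h0 := hM2p i
    have : wsym R₀ n₀ (z i) (p i + ((0 : EuclideanSpace ℝ (Fin n) × EuclideanSpace ℝ (Fin n)).1,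
      (1 : ℝ) • (0 : EuclideanSpace ℝ (Fin n) × EuclideanSpace ℝ (Fin n)).2)) =
        wsym R₀ n₀ (z i) (p i) := by simp [padd_zero]
    rw [this, ← hM2]
    nlinarith)
  have hes := he.scale_one hM2p K' hK'0 hMK
  simp only [Prod.smul_fst, Prod.smul_snd, one_smul] at hws hes
  obtain ⟨hr1, hr2⟩ := H.jb_rho_of_w hz
    (q := fun i y => p i + (M i ^ 2 • y.1, M i ^ 2 • y.2)) (fun i => by fun_prop) hM hws 1 one_pos
    (fun i => by simp [M, padd_zero])
  have h1 := hes.mul (hr1.zpow hM 1 one_pos (fun i => by simp [M, padd_zero]) k) (fun _ => one_pos)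
    (fun i => zpow_pos (hM i) k)
  have h2 := hes.mul (hr2.zpow hM 1 one_pos (fun i => by simp [M, padd_zero]) k) (fun _ => one_pos)
    (fun i => zpow_pos (hM i) k)
  obtain ⟨C1, hC10, hC1⟩ := JB.dmix (p := p)
    (a := fun i q => φ₀ (rZero n R₀ q / δ₀) * rho n R₀ n₀ (z i) q ^ k) hM2p hM2p h1 α β
  obtain ⟨C2, hC20, hC2⟩ := JB.dmix (p := p)
    (a := fun i q => φ₀ (rZero n R₀ q / δ₀) * (‖rho n R₀ n₀ (z i) q‖ : ℂ) ^ k) hM2p hM2p h2 α β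
  refine ⟨C1 + C2, by positivity, ?_⟩
  intro z' hz' p' hp' v w hv hw'
  let i : J := ⟨(z', p'), hz', hp'⟩
  have e : 1 * M i ^ k / ((M i ^ 2) ^ α * (M i ^ 2) ^ β) =
      ‖rho n R₀ n₀ z' p'‖ ^ ((k : ℝ) - 2 * α - 2 * β) := by
    have hm : 0 < ‖rho n R₀ n₀ z' p'‖ := hM i
    change 1 * ‖rho n R₀ n₀ z' p'‖ ^ k / ((‖rho n R₀ n₀ z' p'‖ ^ 2) ^ α *
      (‖rho n R₀ n₀ z' p'‖ ^ 2) ^ β) = _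
    rw [Real.rpow_sub hm, Real.rpow_sub hm, Real.rpow_intCast, Real.rpow_mul hm.le,
      Real.rpow_mul hm.le, Real.rpow_natCast, Real.rpow_natCast, Real.rpow_ofNat, one_mul,
      div_div]
  have g1 := hC1 i v w hv hw'
  have g2 := hC2 i v w hv hw'
  rw [e] at g1 g2
  have hx : 0 ≤ ‖rho n R₀ n₀ z' p'‖ ^ ((k : ℝ) - 2 * α - 2 * β) := by positivity
  refine ⟨g1.trans ?_, g2.trans ?_⟩
  · rw [add_mul]; nlinarith
  · rw [add_mul]; nlinarith

/-- index type of the elliptic region -/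
def JBi (R₀ : (EuclideanSpace ℝ (Fin n)) → ((EuclideanSpace ℝ (Fin n)) →L[ℝ] (EuclideanSpace ℝ (Fin n))))
    (δ₀ : ℝ) : Type :=
  {q : ℂ × (EuclideanSpace ℝ (Fin n) × EuclideanSpace ℝ (Fin n)) //
    Zall q.1 ∧ δ₀ ≤ rZero n R₀ q.2}

/-- parameter of an index -/
def JBi.z (i : JBi R₀ δ₀) : ℂ := i.1.1

/-- point of an index -/
def JBi.p (i : JBi R₀ δ₀) : EuclideanSpace ℝ (Fin n) × EuclideanSpace ℝ (Fin n) := i.1.2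

/-- bracket at an index -/
def JBi.j (i : JBi R₀ δ₀) : ℝ := jap i.p.2

theorem JBi.hj (i : JBi R₀ δ₀) : 0 < i.j := jap_pos _

theorem JBi.hz (i : JBi R₀ δ₀) : Zall i.z := i.2.1

theorem JBi.hr (i : JBi R₀ δ₀) : δ₀ ≤ rZero n R₀ i.p := i.2.2

/-- rescaled point -/
def JBi.q (i : JBi R₀ δ₀) (y : EuclideanSpace ℝ (Fin n) × EuclideanSpace ℝ (Fin n)) :
    EuclideanSpace ℝ (Fin n) × EuclideanSpace ℝ (Fin n) :=
  i.p + (y.1, i.j • y.2)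

theorem JBi.q_zero (i : JBi R₀ δ₀) : i.q 0 = i.p := by simp [JBi.q]

theorem JBi.q_cont (i : JBi R₀ δ₀) : Continuous i.q := by
  unfold JBi.q; fun_prop

theorem dmixB {k : ℤ} {a : ℂ → EuclideanSpace ℝ (Fin n) × EuclideanSpace ℝ (Fin n) → ℂ}
    (h : JB (fun (i : JBi R₀ δ₀) y => a i.z (i.q y)) (fun i => i.j ^ k)) (α β : ℕ) :
    ∃ C : ℝ, 0 ≤ C ∧ ∀ z, Zall z → ∀ p, δ₀ ≤ rZero n R₀ p →
      ∀ (v : Fin α → EuclideanSpace ℝ (Fin n)) (w : Fin β → EuclideanSpace ℝ (Fin n)),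
      (∀ i, ‖v i‖ ≤ 1) → (∀ i, ‖w i‖ ≤ 1) →
      ‖Dmix n (a z) α β v w p‖ ≤ C * jap p.2 ^ ((k : ℝ) - β) := by
  have h' : JB (fun (i : JBi R₀ δ₀) (y : EuclideanSpace ℝ (Fin n) × EuclideanSpace ℝ (Fin n)) =>
      a i.z (i.p + ((fun _ => (1 : ℝ)) i • y.1, i.j • y.2))) (fun i => i.j ^ k) := by
    simp only [one_smul]
    exact h
  obtain ⟨C, hC0, hC⟩ := JB.dmix (p := fun i : JBi R₀ δ₀ => i.p) (a := fun i => a i.z)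
    (s := fun _ => 1) (t := fun i => i.j) (fun _ => one_pos)
    (fun i => i.hj) h' α β
  refine ⟨C, hC0, fun z hz p hp v w hv hw => ?_⟩
  have := hC ⟨(z, p), hz, hp⟩ v w hv hw
  refine this.trans_eq ?_
  rw [Real.rpow_sub (jap_pos _), Real.rpow_intCast, Real.rpow_natCast, one_pow, one_mul]
  rfl

theorem SymHyp.jb_wB (H : SymHyp R₀ n₀ φ₀ δ₀) :
    JB (fun (i : JBi R₀ δ₀) y => wsym R₀ n₀ i.z (i.q y)) (fun i => i.j ^ 2) :=
  H.jb_w (fun i : JBi R₀ δ₀ => i.z) (fun i => i.hz) (fun i => i.p) (fun i => i.j) (fun i => i.j) 1 zero_le_one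
    (fun i => one_le_jap _) (fun i => by rw [one_mul]; exact norm_le_jap _)
    (fun i => by rw [one_mul, abs_of_pos i.hj])

theorem SymHyp.jb_rhoB (H : SymHyp R₀ n₀ φ₀ δ₀) :
    JB (fun (i : JBi R₀ δ₀) y => rho n R₀ n₀ i.z (i.q y)) (fun i => i.j) ∧
    JB (fun (i : JBi R₀ δ₀) y => (‖rho n R₀ n₀ i.z (i.q y)‖ : ℂ)) (fun i => i.j) := by
  obtain ⟨c, hc, h⟩ := H.small
  exact H.jb_rho_of_w (fun i => i.hz) (fun i => i.q_cont) (fun i => i.hj) H.jb_wB c hc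
    (fun i => by rw [i.q_zero]; exact h i.z i.hz i.p i.hr)

theorem SymHyp.jb_etaB (H : SymHyp R₀ n₀ φ₀ δ₀) :
    JB (fun (i : JBi R₀ δ₀) y => (1 - φ₀ (rZero n R₀ (i.q y) / δ₀) : ℂ)) (fun _ => 1) := by
  have hone : JB (fun (i : JBi R₀ δ₀)
      (_ : EuclideanSpace ℝ (Fin n) × EuclideanSpace ℝ (Fin n)) => (1 : ℂ)) (fun _ => 1) :=
    JB.const _ (fun _ => one_pos) 1 zero_le_one (by simp)
  refine hone.sub ?_
  refine JB.split (fun _ => one_pos) (fun i => rZero n R₀ i.p ≤ 2 * δ₀) ?_ ?_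
  · obtain ⟨K, hK1, hK⟩ := H.xi_bound
    have hK0 : 0 ≤ K := zero_le_one.trans hK1
    exact H.jb_eta (fun i : {i : JBi R₀ δ₀ // rZero n R₀ i.p ≤ 2 * δ₀} => i.1.p)
      (fun i => i.1.j) K hK0 (fun i => (norm_le_jap _).trans (hK _ i.2))
      (fun i => by rw [abs_of_pos i.1.hj]; exact hK _ i.2)
  · have hzero : JB (fun (i : {i : JBi R₀ δ₀ // ¬ rZero n R₀ i.p ≤ 2 * δ₀})
        (_ : EuclideanSpace ℝ (Fin n) × EuclideanSpace ℝ (Fin n)) => (0 : ℂ)) (fun _ => 1) :=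
      JB.const _ (fun _ => one_pos) 1 zero_le_one (by simp)
    refine hzero.congr fun i => ?_
    have hc : Continuous (fun y => rZero n R₀ (i.1.q y)) :=
      H.r_contDiff.continuous.comp i.1.q_cont
    have h0 : 2 * δ₀ < rZero n R₀ (i.1.q 0) := by rw [i.1.q_zero]; exact not_le.1 i.2
    filter_upwards [hc.continuousAt.eventually (lt_mem_nhds h0)] with y hy
    rw [H.phi0]
    · simp
    · have := H.dpos
      refine le_trans ?_ (le_abs_self _)
      rw [le_div_iff₀ this]
      exact hy.le

theorem SymHyp.r_low (H : SymHyp R₀ n₀ φ₀ δ₀) :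
    ∃ c : ℝ, 0 < c ∧ ∀ i : JBi R₀ δ₀, c * i.j ≤ Real.sqrt (rZero n R₀ i.p) := by
  obtain ⟨c, hc, h⟩ := H.Rell
  have hd := H.dpos
  have hm : 0 < min δ₀ c / 2 := by positivity
  refine ⟨Real.sqrt (min δ₀ c / 2), Real.sqrt_pos.2 hm, fun i => ?_⟩
  apply Real.le_sqrt_of_sq_le
  rw [mul_pow, Real.sq_sqrt hm.le]
  have h1 : i.j ^ 2 = 1 + ‖i.p.2‖ ^ 2 := jap_sq _
  have h2 := i.hr
  have h3 : c * ‖i.p.2‖ ^ 2 ≤ rZero n R₀ i.p := h _ _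
  have h4 := min_le_left δ₀ c
  have h5 := min_le_right δ₀ c
  rw [h1]
  nlinarith [mul_le_mul_of_nonneg_right h5 (sq_nonneg ‖i.p.2‖)]

/-- `i √r₀` -/
def sig (R₀ : (EuclideanSpace ℝ (Fin n)) → ((EuclideanSpace ℝ (Fin n)) →L[ℝ] (EuclideanSpace ℝ (Fin n))))
    (q : EuclideanSpace ℝ (Fin n) × EuclideanSpace ℝ (Fin n)) : ℂ :=
  Complex.I * (Real.sqrt (rZero n R₀ q) : ℂ)

theorem SymHyp.sig_sq (H : SymHyp R₀ n₀ φ₀ δ₀)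
    (q : EuclideanSpace ℝ (Fin n) × EuclideanSpace ℝ (Fin n)) :
    sig R₀ q ^ 2 = -(rZero n R₀ q : ℂ) := by
  unfold sig
  rw [mul_pow, Complex.I_sq, ← Complex.ofReal_pow, Real.sq_sqrt (H.r_nonneg q)]
  ring

theorem SymHyp.sig_cont (H : SymHyp R₀ n₀ φ₀ δ₀) : Continuous (sig R₀) := by
  unfold sig
  have := H.r_contDiff.continuous
  fun_prop

theorem norm_sig (q : EuclideanSpace ℝ (Fin n) × EuclideanSpace ℝ (Fin n)) :
    ‖sig R₀ q‖ = Real.sqrt (rZero n R₀ q) := by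
  unfold sig
  rw [norm_mul, Complex.norm_I, one_mul, Complex.norm_real, Real.norm_of_nonneg (Real.sqrt_nonneg _)]

theorem SymHyp.jb_sigB (H : SymHyp R₀ n₀ φ₀ δ₀) :
    JB (fun (i : JBi R₀ δ₀) y => sig R₀ (i.q y)) (fun i => i.j) := by
  have hr : JB (fun (i : JBi R₀ δ₀) y => rZero n R₀ (i.q y)) (fun i => i.j ^ 2) :=
    H.jb_r (fun i : JBi R₀ δ₀ => i.p) (fun i => i.j) (fun i => i.j) 1 zero_le_one
    (fun i => i.hj) (fun i => by rw [one_mul]; exact norm_le_jap _)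
    (fun i => by rw [one_mul, abs_of_pos i.hj])
  have hr' := hr.clm (-Complex.ofRealCLM)
  obtain ⟨c, hc, h⟩ := H.r_low
  refine hr'.sqrt (fun i => i.hj) c hc (fun i => ?_)
    (fun i => (H.sig_cont.comp i.q_cont).continuousAt)
    (fun i => Filter.Eventually.of_forall fun y => ?_)
  · rw [i.q_zero, norm_sig]; exact h i
  · rw [H.sig_sq]; simp

theorem SymHyp.tau_low (q : EuclideanSpace ℝ (Fin n) × EuclideanSpace ℝ (Fin n)) (z : ℂ) :
    Real.sqrt (rZero n R₀ q) ≤ ‖rho n R₀ n₀ z q + sig R₀ q‖ := by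
  refine le_trans ?_ ((le_abs_self _).trans (Complex.abs_im_le_norm _))
  have h1 : 0 ≤ (rho n R₀ n₀ z q).im := ssqrt_im_nonneg _
  simp [sig]
  exact h1

theorem SymHyp.jb_diff1 (H : SymHyp R₀ n₀ φ₀ δ₀) :
    JB (fun (i : JBi R₀ δ₀) y => rho n R₀ n₀ i.z (i.q y) - sig R₀ (i.q y))
      (fun i => i.j ^ (-1 : ℤ)) := by
  obtain ⟨c, hc, h⟩ := H.r_low
  have htau := H.jb_rhoB.1.add H.jb_sigB
  have hinv := htau.zpow (fun i => i.hj) c hc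
    (fun i => by rw [i.q_zero]; exact (h i).trans (SymHyp.tau_low _ _)) (-1)
  have hzn := H.jb_zn _ (fun i : JBi R₀ δ₀ => i.hz) (fun i => i.p)
  have h1 := hzn.mul hinv (fun _ => one_pos) (fun i => zpow_pos i.hj _)
  simp only [one_mul] at h1
  refine h1.congr fun i => ?_
  have hc : Continuous (fun y => rho n R₀ n₀ i.z (i.q y) + sig R₀ (i.q y)) :=
    ((H.rho_cont i.hz).comp i.q_cont).add (H.sig_cont.comp i.q_cont)
  have h0 : rho n R₀ n₀ i.z (i.q 0) + sig R₀ (i.q 0) ≠ 0 := by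
    rw [i.q_zero, ← norm_pos_iff]
    exact (Real.sqrt_pos.2 (H.dpos.trans_le i.hr)).trans_le (SymHyp.tau_low _ _)
  filter_upwards [hc.continuousAt.eventually_ne h0] with y hy
  rw [zpow_neg_one, eq_mul_inv_iff_mul_eq₀ hy]
  have e1 := rho_sq (R₀ := R₀) (n₀ := n₀) i.z (i.q y)
  have e2 := H.sig_sq (i.q y)
  have e3 : wsym R₀ n₀ i.z (i.q y) =
    -(rZero n R₀ (i.q y) : ℂ) + i.z * (n₀ (i.p.1 + y.1) : ℂ) := rfl
  linear_combination e1 - e2 + e3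

theorem SymHyp.jb_diff_nat (H : SymHyp R₀ n₀ φ₀ δ₀) (k : ℕ) :
    JB (fun (i : JBi R₀ δ₀) y => rho n R₀ n₀ i.z (i.q y) ^ (k : ℤ) - sig R₀ (i.q y) ^ (k : ℤ))
      (fun i => i.j ^ ((k : ℤ) - 2)) := by
  obtain ⟨c, hc, h⟩ := H.small
  have hz : ∀ (m : ℤ) (i : JBi R₀ δ₀), 0 < i.j ^ m := fun m i => zpow_pos i.hj m
  induction k with
  | zero =>
    simp only [Nat.cast_zero, zpow_zero, sub_self]
    exact JB.const _ (hz _) 0 le_rfl (by simp)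
  | succ k ih =>
    have hk := H.jb_rhoB.1.zpow (fun i => i.hj) c hc
      (fun i => by rw [i.q_zero]; exact h i.z i.hz i.p i.hr) (k : ℤ)
    have h1 := hk.mul H.jb_diff1 (hz _) (hz _)
    have h2 := ih.mul H.jb_sigB (hz _) (fun i => i.hj)
    have h1' := h1.mono (N := fun i => i.j ^ (((k + 1 : ℕ) : ℤ) - 2)) 1 zero_le_one (fun i => by
      rw [one_mul, ← zpow_add₀ i.hj.ne']
      apply le_of_eq; congr 1; push_cast; ring)
    have h2' := h2.mono (N := fun i => i.j ^ (((k + 1 : ℕ) : ℤ) - 2)) 1 zero_le_one (fun i => by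
      rw [one_mul, ← zpow_add_one₀ i.hj.ne']
      apply le_of_eq; congr 1; push_cast; ring)
    have h3 := h1'.add h2'
    convert h3 using 3 with i y
    simp only [zpow_natCast, pow_succ]
    ring

theorem SymHyp.jb_diff (H : SymHyp R₀ n₀ φ₀ δ₀) (k : ℤ) :
    JB (fun (i : JBi R₀ δ₀) y => rho n R₀ n₀ i.z (i.q y) ^ k - sig R₀ (i.q y) ^ k)
      (fun i => i.j ^ (k - 2)) := by
  rcases k.eq_nat_or_neg with ⟨m, rfl | rfl⟩
  · exact H.jb_diff_nat m
  obtain ⟨c, hc, h⟩ := H.small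
  obtain ⟨c', hc', h'⟩ := H.r_low
  have hz : ∀ (m : ℤ) (i : JBi R₀ δ₀), 0 < i.j ^ m := fun m i => zpow_pos i.hj m
  have h1 := H.jb_rhoB.1.zpow (fun i => i.hj) c hc
    (fun i => by rw [i.q_zero]; exact h i.z i.hz i.p i.hr) (-(m : ℤ))
  have h2 := H.jb_sigB.zpow (fun i => i.hj) c' hc'
    (fun i => by rw [i.q_zero, norm_sig]; exact h' i) (-(m : ℤ))
  have h3 := h1.mul h2 (hz _) (hz _)
  have h4 := ((H.jb_diff_nat m).mul h3 (hz _) (fun i => mul_pos (hz _ i) (hz _ i))).clm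
    (-ContinuousLinearMap.id ℝ ℂ)
  have h5 := h4.mono (N := fun i => i.j ^ (-(m : ℤ) - 2)) 1 zero_le_one (fun i => by
    rw [one_mul, ← zpow_add₀ i.hj.ne', ← zpow_add₀ i.hj.ne']
    apply le_of_eq; congr 1; ring)
  refine h5.congr fun i => ?_
  have h0 : sig R₀ (i.q 0) ≠ 0 := by
    rw [i.q_zero, ← norm_pos_iff, norm_sig]
    exact Real.sqrt_pos.2 (H.dpos.trans_le i.hr)
  filter_upwards [(H.sig_cont.comp i.q_cont).continuousAt.eventually_ne h0] with y hy
  have hy' : sig R₀ (i.q y) ≠ 0 := hy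
  have hr := H.rho_ne i.hz (i.q y)
  simp only [zpow_neg, zpow_natCast, ContinuousLinearMap.id_apply, neg_apply]
  field_simp
  ring

theorem rpow_equiv {x y c C : ℝ} (hx : 0 < x) (hc : 0 < c) (hy : 0 < y) (h1 : c * x ≤ y)
    (h2 : y ≤ C * x) (e : ℝ) :
    x ^ e ≤ ((c⁻¹) ^ e + ((C : ℝ) ^ (-e))) * y ^ e := by
  have hC : 0 < C := by
    by_contra hC
    have : C * x ≤ 0 := mul_nonpos_of_nonpos_of_nonneg (not_lt.1 hC) hx.le
    linarith
  have hye : 0 < y ^ e := Real.rpow_pos_of_pos hy e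
  rcases le_total 0 e with he | he
  · have h3 : x ≤ c⁻¹ * y := by rw [inv_mul_eq_div, le_div_iff₀ hc]; linarith
    have h4 := Real.rpow_le_rpow hx.le h3 he
    rw [Real.mul_rpow (by positivity) hy.le] at h4
    have : 0 ≤ C ^ (-e) * y ^ e := by positivity
    linarith
  · have h3 : C⁻¹ * y ≤ x := by rw [inv_mul_eq_div, div_le_iff₀ hC]; linarith
    have h4 := Real.rpow_le_rpow_of_nonpos (by positivity) h3 he
    rw [Real.mul_rpow (by positivity) hy.le, Real.inv_rpow hC.le, ← Real.rpow_neg hC.le] at h4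
    have : 0 ≤ c⁻¹ ^ e * y ^ e := by positivity
    linarith

theorem SymHyp.jap_rho (H : SymHyp R₀ n₀ φ₀ δ₀) (e : ℝ) :
    ∃ C : ℝ, 0 ≤ C ∧ ∀ z, Zall z → ∀ p, δ₀ ≤ rZero n R₀ p →
      jap p.2 ^ e ≤ C * ‖rho n R₀ n₀ z p‖ ^ e := by
  obtain ⟨c, hc, h⟩ := H.small
  obtain ⟨C, hC0, hC⟩ := H.jb_rhoB.1.norm_zero
  refine ⟨(c⁻¹) ^ e + (C : ℝ) ^ (-e), by positivity, fun z hz p hp => ?_⟩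
  have h2 : ‖rho n R₀ n₀ z p‖ ≤ C * jap p.2 := by
    let i : JBi R₀ δ₀ := ⟨(z, p), hz, hp⟩
    have h3 := hC i
    rw [i.q_zero] at h3
    exact h3
  exact rpow_equiv (jap_pos _) hc (norm_pos_iff.2 (H.rho_ne hz p)) (h z hz p hp) h2 e

theorem SymHyp.eta_one_near (H : SymHyp R₀ n₀ φ₀ δ₀)
    {p : EuclideanSpace ℝ (Fin n) × EuclideanSpace ℝ (Fin n)} (hp : rZero n R₀ p < δ₀)
    (f : EuclideanSpace ℝ (Fin n) × EuclideanSpace ℝ (Fin n) → ℂ) :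
    (fun q => (1 - φ₀ (rZero n R₀ q / δ₀)) * f q) =ᶠ[𝓝 p] fun _ => 0 := by
  have hd := H.dpos
  filter_upwards [H.r_contDiff.continuous.continuousAt.eventually (gt_mem_nhds hp)] with q hq
  rw [H.phi1]
  · simp
  · rw [abs_of_nonneg (div_nonneg (H.r_nonneg q) hd.le), div_le_one hd]
    exact hq.le

theorem SymHyp.eta_zero_near (H : SymHyp R₀ n₀ φ₀ δ₀)
    {p : EuclideanSpace ℝ (Fin n) × EuclideanSpace ℝ (Fin n)} (hp : 2 * δ₀ < rZero n R₀ p)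
    (f : EuclideanSpace ℝ (Fin n) × EuclideanSpace ℝ (Fin n) → ℂ) :
    (fun q => φ₀ (rZero n R₀ q / δ₀) * f q) =ᶠ[𝓝 p] fun _ => 0 := by
  have hd := H.dpos
  filter_upwards [H.r_contDiff.continuous.continuousAt.eventually (lt_mem_nhds hp)] with q hq
  rw [H.phi0]
  · simp
  · rw [abs_of_nonneg (div_nonneg (H.r_nonneg q) hd.le), le_div_iff₀ hd]
    exact hq.le

theorem SymHyp.regionB (H : SymHyp R₀ n₀ φ₀ δ₀) {k : ℤ}
    {f : ℂ → EuclideanSpace ℝ (Fin n) × EuclideanSpace ℝ (Fin n) → ℂ}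
    (h : JB (fun (i : JBi R₀ δ₀) y => f i.z (i.q y)) (fun i => i.j ^ k)) (α β : ℕ) :
    ∃ C : ℝ, 0 ≤ C ∧ ∀ z, Zall z →
      ∀ (v : Fin α → EuclideanSpace ℝ (Fin n)) (w : Fin β → EuclideanSpace ℝ (Fin n)),
      (∀ i, ‖v i‖ ≤ 1) → (∀ i, ‖w i‖ ≤ 1) → ∀ p,
      ‖Dmix n (fun q => (1 - φ₀ (rZero n R₀ q / δ₀)) * f z q) α β v w p‖ ≤
        C * jap p.2 ^ ((k : ℝ) - β) ∧
      ‖Dmix n (fun q => (1 - φ₀ (rZero n R₀ q / δ₀)) * f z q) α β v w p‖ ≤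
        C * ‖rho n R₀ n₀ z p‖ ^ ((k : ℝ) - β) := by
  have h1 := H.jb_etaB.mul h (fun _ => one_pos) (fun i => zpow_pos i.hj _)
  simp only [one_mul] at h1
  obtain ⟨C, hC0, hC⟩ := dmixB
    (a := fun z q => (1 - φ₀ (rZero n R₀ q / δ₀)) * f z q) h1 α β
  obtain ⟨C', hC0', hC'⟩ := H.jap_rho ((k : ℝ) - β)
  refine ⟨C + C * C', by positivity, fun z hz v w hv hw p => ?_⟩
  have hj : 0 ≤ jap p.2 ^ ((k : ℝ) - β) := Real.rpow_nonneg (jap_pos _).le _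
  have hr : 0 ≤ ‖rho n R₀ n₀ z p‖ ^ ((k : ℝ) - β) := by positivity
  rcases lt_or_ge (rZero n R₀ p) δ₀ with hp | hp
  · rw [dmix_zero (H.eta_one_near hp _), norm_zero]
    exact ⟨by positivity, by positivity⟩
  · have g := hC z hz p hp v w hv hw
    have g' := hC' z hz p hp
    refine ⟨g.trans ?_, g.trans ?_⟩
    · have : 0 ≤ C * C' * jap p.2 ^ ((k : ℝ) - β) := by positivity
      linarith
    · have : 0 ≤ C * ‖rho n R₀ n₀ z p‖ ^ ((k : ℝ) - β) := by positivity
      have := mul_le_mul_of_nonneg_left g' hC0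
      linarith

theorem SymHyp.main (H : SymHyp R₀ n₀ φ₀ δ₀) (k : ℤ) :
      (∀ α β : ℕ, ∃ C : ℝ, ∀ z, Zall z →
        ∀ (v : Fin α → EuclideanSpace ℝ (Fin n)) (w : Fin β → EuclideanSpace ℝ (Fin n)),
          (∀ i, ‖v i‖ ≤ 1) → (∀ i, ‖w i‖ ≤ 1) → ∀ p,
          (‖Dmix n (fun q => φ₀ (rZero n R₀ q / δ₀) * rho n R₀ n₀ z q ^ k) α β v w p‖ ≤
              C * ‖rho n R₀ n₀ z p‖ ^ ((k : ℝ) - 2 * α - 2 * β) ∧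
            ‖Dmix n (fun q => φ₀ (rZero n R₀ q / δ₀) * ((‖rho n R₀ n₀ z q‖ : ℂ) ^ k))
                α β v w p‖ ≤
              C * ‖rho n R₀ n₀ z p‖ ^ ((k : ℝ) - 2 * α - 2 * β)) ∧
          (‖Dmix n (fun q => (1 - φ₀ (rZero n R₀ q / δ₀)) * rho n R₀ n₀ z q ^ k)
                α β v w p‖ ≤
              C * ‖rho n R₀ n₀ z p‖ ^ ((k : ℝ) - β) ∧
            ‖Dmix n (fun q => (1 - φ₀ (rZero n R₀ q / δ₀)) * ((‖rho n R₀ n₀ z q‖ : ℂ) ^ k))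
                α β v w p‖ ≤
              C * ‖rho n R₀ n₀ z p‖ ^ ((k : ℝ) - β))) ∧
      (∀ α β : ℕ, ∃ C : ℝ, ∀ z, Zall z →
        ∀ (v : Fin α → EuclideanSpace ℝ (Fin n)) (w : Fin β → EuclideanSpace ℝ (Fin n)),
          (∀ i, ‖v i‖ ≤ 1) → (∀ i, ‖w i‖ ≤ 1) → ∀ p,
          ‖Dmix n (fun q => (1 - φ₀ (rZero n R₀ q / δ₀)) * rho n R₀ n₀ z q ^ k)
              α β v w p‖ ≤ C * jap p.2 ^ ((k : ℝ) - β) ∧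
          ‖Dmix n (fun q => (1 - φ₀ (rZero n R₀ q / δ₀)) * ((‖rho n R₀ n₀ z q‖ : ℂ) ^ k))
              α β v w p‖ ≤ C * jap p.2 ^ ((k : ℝ) - β)) ∧
      (∀ α β : ℕ, ∃ C : ℝ, ∀ z, Zall z →
        ∀ (v : Fin α → EuclideanSpace ℝ (Fin n)) (w : Fin β → EuclideanSpace ℝ (Fin n)),
          (∀ i, ‖v i‖ ≤ 1) → (∀ i, ‖w i‖ ≤ 1) → ∀ p,
          ‖Dmix n (fun q => (1 - φ₀ (rZero n R₀ q / δ₀)) *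
              (rho n R₀ n₀ z q ^ k -
                (Complex.I * (Real.sqrt (rZero n R₀ q) : ℂ)) ^ k)) α β v w p‖ ≤
            C * jap p.2 ^ ((k : ℝ) - 2 - β)) := by
  obtain ⟨c, hc, h⟩ := H.small
  have hk1 := H.jb_rhoB.1.zpow (fun i => i.hj) c hc
    (fun i => by rw [i.q_zero]; exact h i.z i.hz i.p i.hr) k
  have hk2 := H.jb_rhoB.2.zpow (fun i => i.hj) c hc
    (fun i => by
      rw [i.q_zero, Complex.norm_real, norm_norm]; exact h i.z i.hz i.p i.hr) k
  refine ⟨fun α β => ?_, fun α β => ?_, fun α β => ?_⟩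
  · obtain ⟨A, hA0, hA⟩ := H.regionA k α β
    obtain ⟨B, hB0, hB⟩ := H.regionB (f := fun z q => rho n R₀ n₀ z q ^ k) hk1 α β
    obtain ⟨B', hB0', hB'⟩ := H.regionB (f := fun z q => (‖rho n R₀ n₀ z q‖ : ℂ) ^ k) hk2 α β
    refine ⟨A + B + B', fun z hz v w hv hw p => ⟨?_, ?_⟩⟩
    · have hx : 0 ≤ ‖rho n R₀ n₀ z p‖ ^ ((k : ℝ) - 2 * α - 2 * β) := by positivity
      rcases lt_or_ge (2 * δ₀) (rZero n R₀ p) with hp | hp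
      · rw [dmix_zero (H.eta_zero_near hp _), dmix_zero (H.eta_zero_near hp _), norm_zero]
        exact ⟨by positivity, by positivity⟩
      · have g := hA z hz p hp v w hv hw
        have hle : A * ‖rho n R₀ n₀ z p‖ ^ ((k : ℝ) - 2 * α - 2 * β) ≤
            (A + B + B') * ‖rho n R₀ n₀ z p‖ ^ ((k : ℝ) - 2 * α - 2 * β) := by
          gcongr; linarith
        exact ⟨g.1.trans hle, g.2.trans hle⟩
    · refine ⟨(hB z hz v w hv hw p).2.trans ?_, (hB' z hz v w hv hw p).2.trans ?_⟩
      · gcongr; linarith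
      · gcongr; linarith
  · obtain ⟨B, hB0, hB⟩ := H.regionB (f := fun z q => rho n R₀ n₀ z q ^ k) hk1 α β
    obtain ⟨B', hB0', hB'⟩ := H.regionB (f := fun z q => (‖rho n R₀ n₀ z q‖ : ℂ) ^ k) hk2 α β
    refine ⟨B + B', fun z hz v w hv hw p => ?_⟩
    have hj : 0 ≤ jap p.2 ^ ((k : ℝ) - β) := Real.rpow_nonneg (jap_pos _).le _
    refine ⟨(hB z hz v w hv hw p).1.trans ?_, (hB' z hz v w hv hw p).1.trans ?_⟩
    · gcongr; linarith
    · gcongr; linarith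
  · obtain ⟨B, hB0, hB⟩ := H.regionB
      (f := fun z q => rho n R₀ n₀ z q ^ k - sig R₀ q ^ k) (H.jb_diff k) α β
    refine ⟨B, fun z hz v w hv hw p => ?_⟩
    have := (hB z hz v w hv hw p).1
    push_cast at this
    exact this

end SymbolProof3

/-- **Lemma 3.2 of [V1] + (3.3), (3.4)** (formulas (3.2)–(3.4) of the paper).
For every integer `k`:
(i) `ρ^k, |ρ|^k ∈ S^k_{2,2}(|ρ|) + S^k_{0,1}(|ρ|)` uniformly in `z ∈ Z₁ ∪ Z₂ ∪ Z₃`;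
(ii) `(1−η)ρ^k, (1−η)|ρ|^k ∈ 𝒮_0^k`;
(iii) `(1−η)ρ^k − (1−η)(i√r₀)^k ∈ 𝒮_0^{k−2}`. -/
theorem statement_7 (n : ℕ) (hn : 0 < n)
    (R₀ : EuclideanSpace ℝ (Fin n) → (EuclideanSpace ℝ (Fin n) →L[ℝ] EuclideanSpace ℝ (Fin n)))
    (hR₀smooth : ContDiff ℝ (⊤ : ℕ∞) R₀)
    (hR₀bdd : ∀ m : ℕ, ∃ C : ℝ, ∀ x, ‖iteratedFDeriv ℝ m R₀ x‖ ≤ C)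
    (hR₀sym : ∀ x ξ ζ, (inner ℝ (R₀ x ξ) ζ : ℝ) = (inner ℝ ξ (R₀ x ζ) : ℝ))
    (hR₀ell : ∃ c : ℝ, 0 < c ∧ ∀ x ξ, c * ‖ξ‖ ^ 2 ≤ (inner ℝ (R₀ x ξ) ξ : ℝ))
    (n₀ : EuclideanSpace ℝ (Fin n) → ℝ) (hn₀smooth : ContDiff ℝ (⊤ : ℕ∞) n₀)
    (hn₀bdd : ∀ m : ℕ, ∃ C : ℝ, ∀ x, ‖iteratedFDeriv ℝ m n₀ x‖ ≤ C)
    (hn₀pos : ∃ c : ℝ, 0 < c ∧ ∀ x, c ≤ n₀ x)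
    -- the cutoff function φ₀ and the glancing cutoff η = φ₀(r₀/δ₀)
    (φ₀ : ℝ → ℝ) (hφ₀ : ContDiff ℝ (⊤ : ℕ∞) φ₀) (hφ₀range : ∀ t, φ₀ t ∈ Set.Icc (0 : ℝ) 1)
    (hφ₀one : ∀ t, |t| ≤ 1 → φ₀ t = 1) (hφ₀zero : ∀ t, 2 ≤ |t| → φ₀ t = 0)
    (δ₀ : ℝ) (hδ₀ : 0 < δ₀)
    -- δ₀ is small enough: |ρ| ≳ ⟨ξ'⟩ on supp (1−η)
    (hδ₀small : ∃ c : ℝ, 0 < c ∧ ∀ z, Zall z → ∀ p, δ₀ ≤ rZero n R₀ p →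
      c * jap p.2 ≤ ‖rho n R₀ n₀ z p‖) :
    ∀ k : ℤ,
      -- (i)  ρ^k, |ρ|^k ∈ S^k_{2,2}(|ρ|) + S^k_{0,1}(|ρ|), uniformly in z
      (∀ α β : ℕ, ∃ C : ℝ, ∀ z, Zall z →
        ∀ (v : Fin α → EuclideanSpace ℝ (Fin n)) (w : Fin β → EuclideanSpace ℝ (Fin n)),
          (∀ i, ‖v i‖ ≤ 1) → (∀ i, ‖w i‖ ≤ 1) → ∀ p,
          (‖Dmix n (fun q => φ₀ (rZero n R₀ q / δ₀) * rho n R₀ n₀ z q ^ k) α β v w p‖ ≤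
              C * ‖rho n R₀ n₀ z p‖ ^ ((k : ℝ) - 2 * α - 2 * β) ∧
            ‖Dmix n (fun q => φ₀ (rZero n R₀ q / δ₀) * ((‖rho n R₀ n₀ z q‖ : ℂ) ^ k))
                α β v w p‖ ≤
              C * ‖rho n R₀ n₀ z p‖ ^ ((k : ℝ) - 2 * α - 2 * β)) ∧
          (‖Dmix n (fun q => (1 - φ₀ (rZero n R₀ q / δ₀)) * rho n R₀ n₀ z q ^ k)
                α β v w p‖ ≤
              C * ‖rho n R₀ n₀ z p‖ ^ ((k : ℝ) - β) ∧
            ‖Dmix n (fun q => (1 - φ₀ (rZero n R₀ q / δ₀)) * ((‖rho n R₀ n₀ z q‖ : ℂ) ^ k))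
                α β v w p‖ ≤
              C * ‖rho n R₀ n₀ z p‖ ^ ((k : ℝ) - β))) ∧
      -- (ii)  (1−η)ρ^k, (1−η)|ρ|^k ∈ 𝒮_0^k
      (∀ α β : ℕ, ∃ C : ℝ, ∀ z, Zall z →
        ∀ (v : Fin α → EuclideanSpace ℝ (Fin n)) (w : Fin β → EuclideanSpace ℝ (Fin n)),
          (∀ i, ‖v i‖ ≤ 1) → (∀ i, ‖w i‖ ≤ 1) → ∀ p,
          ‖Dmix n (fun q => (1 - φ₀ (rZero n R₀ q / δ₀)) * rho n R₀ n₀ z q ^ k)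
              α β v w p‖ ≤ C * jap p.2 ^ ((k : ℝ) - β) ∧
          ‖Dmix n (fun q => (1 - φ₀ (rZero n R₀ q / δ₀)) * ((‖rho n R₀ n₀ z q‖ : ℂ) ^ k))
              α β v w p‖ ≤ C * jap p.2 ^ ((k : ℝ) - β)) ∧
      -- (iii)  (1−η)ρ^k − (1−η)(i√r₀)^k ∈ 𝒮_0^{k−2}
      (∀ α β : ℕ, ∃ C : ℝ, ∀ z, Zall z →
        ∀ (v : Fin α → EuclideanSpace ℝ (Fin n)) (w : Fin β → EuclideanSpace ℝ (Fin n)),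
          (∀ i, ‖v i‖ ≤ 1) → (∀ i, ‖w i‖ ≤ 1) → ∀ p,
          ‖Dmix n (fun q => (1 - φ₀ (rZero n R₀ q / δ₀)) *
              (rho n R₀ n₀ z q ^ k -
                (Complex.I * (Real.sqrt (rZero n R₀ q) : ℂ)) ^ k)) α β v w p‖ ≤
            C * jap p.2 ^ ((k : ℝ) - 2 - β)) := by
  intro k
  obtain ⟨c, hc, hcn⟩ := hn₀pos
  have H : SymHyp R₀ n₀ φ₀ δ₀ :=
    { Rs := hR₀smooth, Rb := hR₀bdd, Rell := hR₀ell, ns := hn₀smooth, nb := hn₀bdd,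
      npos := fun x => hc.trans_le (hcn x), phis := hφ₀, phi1 := hφ₀one, phi0 := hφ₀zero,
      dpos := hδ₀, small := hδ₀small }
  exact H.main k

end
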